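/- arXiv:2204.07785 — 4 statements merged into one kernel-verified Lean document; each statement's English description precedes it below -/
import Mathlib

section
/- There exists δ > 0 such that for all real u, w with |u|, |w| < δ, 1 + ∑_{k ≥ 2n, n ≥ 1} G_0^*(k,n,n) u^{k−2n} w^n = exp( ∑_{n ≥ 2} (t(n)/n)((x*)^n + (y*)^n − u^n) ), where x* and y* are the two (possibly complex) roots of X² − uX − w = 0 (so x* + y* = u and x*y* = −w; the quantity (x*)^n + (y*)^n is real), and both series converge absolutely. -/
open scoped BigOperators

/-- The multiple `t`-value of an index `K = (k₁, …, kₙ)` (a list of positive integers):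
`t(K) = ∑_{m₁ > ⋯ > mₙ > 0, all mᵢ odd} 1 / (m₁^{k₁} ⋯ mₙ^{kₙ})`. -/
noncomputable def multT (K : List ℕ) : ℝ :=
  ∑' m : Fin K.length → ℕ,
    if (∀ i, Odd (m i)) ∧ (∀ i j : Fin K.length, i < j → m j < m i) then
      ∏ i, ((m i : ℝ) ^ K.get i)⁻¹
    else 0

/-- The multiple `t`-star value of an index `K = (k₁, …, kₙ)`:
`t*(K) = ∑_{m₁ ≥ ⋯ ≥ mₙ > 0, all mᵢ odd} 1 / (m₁^{k₁} ⋯ mₙ^{kₙ})`. -/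
noncomputable def multTStar (K : List ℕ) : ℝ :=
  ∑' m : Fin K.length → ℕ,
    if (∀ i, Odd (m i)) ∧ (∀ i j : Fin K.length, i < j → m j ≤ m i) then
      ∏ i, ((m i : ℝ) ^ K.get i)⁻¹
    else 0

/-- An index (list of positive integers) is admissible if its first entry is `> 1`. -/
def Admissible (K : List ℕ) : Prop := (∀ i ∈ K, 1 ≤ i) ∧ 2 ≤ K.headI

instance : DecidablePred Admissible := fun K =>
  inferInstanceAs (Decidable ((∀ i ∈ K, 1 ≤ i) ∧ 2 ≤ K.headI))

/-- `G0h k n s` is the sum of multiple `t`-values over all admissible indices of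
weight `k`, depth `n` and height `s`. -/
noncomputable def G0h (k n s : ℕ) : ℝ :=
  ∑' K : List ℕ,
    if Admissible K ∧ K.sum = k ∧ K.length = n ∧
        K.countP (fun i => decide (2 ≤ i)) = s then
      multT K
    else 0

/-- `G0hStar k n s` is the sum of multiple `t`-star values over all admissible indices of
weight `k`, depth `n` and height `s`. -/
noncomputable def G0hStar (k n s : ℕ) : ℝ :=
  ∑' K : List ℕ,
    if Admissible K ∧ K.sum = k ∧ K.length = n ∧
        K.countP (fun i => decide (2 ≤ i)) = s then
      multTStar K
    else 0

/-- `G0d k n` is the sum of multiple `t`-values over all admissible indices of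
weight `k` and depth `n`. -/
noncomputable def G0d (k n : ℕ) : ℝ :=
  ∑' K : List ℕ,
    if Admissible K ∧ K.sum = k ∧ K.length = n then multT K else 0

/-- `G0dStar k n` is the sum of multiple `t`-star values over all admissible indices of
weight `k` and depth `n`. -/
noncomputable def G0dStar (k n : ℕ) : ℝ :=
  ∑' K : List ℕ,
    if Admissible K ∧ K.sum = k ∧ K.length = n then multTStar K else 0

/-- The single `t`-value `t(n) = ∑_{m odd, m > 0} 1 / m^n`. -/
noncomputable def tval (n : ℕ) : ℝ := ∑' m : ℕ, 1 / (2 * (m : ℝ) + 1) ^ n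

/-- The ascending Pochhammer symbol `(a)ₙ = a (a+1) ⋯ (a+n-1)`. -/
noncomputable def poch (a : ℂ) (n : ℕ) : ℂ := ∏ i ∈ Finset.range n, (a + i)

/-- The generalized hypergeometric function `₃F₂(a, b, c; d, e; z)`. -/
noncomputable def hyp3F2 (a b c d e z : ℂ) : ℂ :=
  ∑' n : ℕ, poch a n * poch b n * poch c n /
      ((n.factorial : ℂ) * poch d n * poch e n) * z ^ n

/-- The generalized hypergeometric function with upper parameters `as` and lower
parameters `bs`. -/
noncomputable def hypF (as bs : List ℂ) (z : ℂ) : ℂ :=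
  ∑' n : ℕ, (as.map fun a => poch a n).prod /
      ((n.factorial : ℂ) * (bs.map fun b => poch b n).prod) * z ^ n

/-- The one-variable multiple polylogarithm
`L_K(z) = ∑_{m₁ > ⋯ > mₙ > 0, all mᵢ odd} z^{m₁} / (m₁^{k₁} ⋯ mₙ^{kₙ})`. -/
noncomputable def Lt (K : List ℕ) (z : ℝ) : ℝ :=
  ∑' m : Fin K.length → ℕ,
    if h : (∀ i, Odd (m i)) ∧ (∀ i j : Fin K.length, i < j → m j < m i) ∧
        0 < K.length then
      z ^ (m ⟨0, h.2.2⟩) * ∏ i, ((m i : ℝ) ^ K.get i)⁻¹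
    else 0

/-- The one-variable star multiple polylogarithm
`L*_K(z) = ∑_{m₁ ≥ ⋯ ≥ mₙ > 0, all mᵢ odd} z^{m₁} / (m₁^{k₁} ⋯ mₙ^{kₙ})`. -/
noncomputable def LtStar (K : List ℕ) (z : ℝ) : ℝ :=
  ∑' m : Fin K.length → ℕ,
    if h : (∀ i, Odd (m i)) ∧ (∀ i j : Fin K.length, i < j → m j ≤ m i) ∧
        0 < K.length then
      z ^ (m ⟨0, h.2.2⟩) * ∏ i, ((m i : ℝ) ^ K.get i)⁻¹
    else 0

/-- `G0hz k n s z` is the sum of `L_K(z)` over all admissible indices `K` of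
weight `k`, depth `n` and height `s`. -/
noncomputable def G0hz (k n s : ℕ) (z : ℝ) : ℝ :=
  ∑' K : List ℕ,
    if Admissible K ∧ K.sum = k ∧ K.length = n ∧
        K.countP (fun i => decide (2 ≤ i)) = s then
      Lt K z
    else 0

/-- `G0hzStar k n s z` is the sum of `L*_K(z)` over all admissible indices `K` of
weight `k`, depth `n` and height `s`. -/
noncomputable def G0hzStar (k n s : ℕ) (z : ℝ) : ℝ :=
  ∑' K : List ℕ,
    if Admissible K ∧ K.sum = k ∧ K.length = n ∧
        K.countP (fun i => decide (2 ≤ i)) = s then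
      LtStar K z
    else 0

/-! The left-hand side is a sum over lists of pairs `(k, m)`, with `m` odd and weakly decreasing and
every `k ≥ 2`, of the product of the weights `u ^ (k - 2) * w / m ^ k`. Such a list is the
concatenation of its blocks of constant `m`, and a block is an arbitrary list of exponents `k`, so
geometric series give `∏ₘ (1 - cₘ)⁻¹` with `cₘ = ∑ₖ u ^ (k - 2) * w / m ^ k = w / (m (m - u))`.
Since `x` and `y` are the roots of `X² - u X - w`, the factor at `m` is
`(1 - u / m) / ((1 - x / m) (1 - y / m))`.

On the other side, expanding `t(n)` and exchanging summations turns `∑_{n ≥ 2} t(n) zⁿ / n` into the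
sum over odd `m` of `-log (1 - z / m) - z / m`. In the combination for `x`, `y` and `u` the terms
`z / m` cancel because `x + y = u`, and exponentiating yields the same product. -/

open Filter Topology

section ListSums

variable {α 𝕜 : Type*} [NormedField 𝕜] [CompleteSpace 𝕜]

theorem summable_norm_and_hasSum_mul {ι κ : Type*} {f : ι → 𝕜} {g : κ → 𝕜} {s t : 𝕜}
    (hf : (Summable fun i => ‖f i‖) ∧ HasSum f s) (hg : (Summable fun k => ‖g k‖) ∧ HasSum g t) :
    (Summable fun p : ι × κ => ‖f p.1 * g p.2‖) ∧
      HasSum (fun p : ι × κ => f p.1 * g p.2) (s * t) :=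
  ⟨hf.1.mul_norm hg.1, hf.2.mul hg.2 (summable_mul_of_summable_norm hf.1 hg.1)⟩

theorem summable_norm_and_hasSum_prod_tuple {f : α → 𝕜} (hf : Summable fun a => ‖f a‖) (n : ℕ) :
    (Summable fun v : Fin n → α => ‖∏ i, f (v i)‖) ∧
      HasSum (fun v : Fin n → α => ∏ i, f (v i)) ((∑' a, f a) ^ n) := by
  induction n with
  | zero => exact ⟨Summable.of_finite, by simp⟩
  | succ n ih =>
    have hcons (p : α × (Fin n → α)) :
        ∏ i, f (Fin.consEquiv (fun _ => α) p i) = f p.1 * ∏ i, f (p.2 i) := by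
      simp [Fin.consEquiv, Fin.prod_univ_succ]
    rw [← (Fin.consEquiv fun _ => α).summable_iff, ← (Fin.consEquiv fun _ => α).hasSum_iff,
      pow_succ']
    simpa only [Function.comp_def, hcons] using
      summable_norm_and_hasSum_mul ⟨hf, hf.of_norm.hasSum⟩ ih

theorem summable_norm_and_hasSum_list_prod {f : α → 𝕜} (hf : Summable fun a => ‖f a‖)
    (hlt : ∑' a, ‖f a‖ < 1) :
    (Summable fun L : List α => ‖(L.map f).prod‖) ∧
      HasSum (fun L : List α => (L.map f).prod) (1 - ∑' a, f a)⁻¹ := by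
  have hofFn (v : Σ n, Fin n → α) :
      ((List.equivSigmaTuple.symm v).map f).prod = ∏ i, f (v.2 i) := by
    simp [List.equivSigmaTuple, List.map_ofFn, List.prod_ofFn]
  have hnorm (n : ℕ) : ∑' v : Fin n → α, ‖∏ i, f (v i)‖ = (∑' a, ‖f a‖) ^ n := by
    simpa only [norm_prod] using
      (summable_norm_and_hasSum_prod_tuple (f := fun a => ‖f a‖) (by simpa using hf) n).2.tsum_eq
  have hsum : Summable fun v : Σ n, Fin n → α => ‖∏ i, f (v.2 i)‖ := by
    refine (summable_sigma_of_nonneg fun _ => norm_nonneg _).2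
      ⟨fun n => (summable_norm_and_hasSum_prod_tuple hf n).1, ?_⟩
    simpa only [hnorm] using summable_geometric_of_lt_one (tsum_nonneg fun _ => norm_nonneg _) hlt
  have hgeom := hasSum_geometric_of_norm_lt_one ((norm_tsum_le_tsum_norm hf).trans_lt hlt)
  have hfiber := hsum.of_norm.hasSum.sigma fun n => (summable_norm_and_hasSum_prod_tuple hf n).2
  rw [← List.equivSigmaTuple.symm.summable_iff, ← List.equivSigmaTuple.symm.hasSum_iff,
    hgeom.unique hfiber]
  simp only [Function.comp_def, hofFn]
  exact ⟨hsum, hsum.of_norm.hasSum⟩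

end ListSums

theorem bddAbove_range_prod_one_sub_inv {c : ℕ → ℝ} (hc : Summable c) (hlt : ∀ j, c j < 1) :
    BddAbove (Set.range fun N => ∏ j ∈ Finset.range N, (1 - c j)⁻¹) := by
  have hlog : Summable fun j => Real.log (1 - c j)⁻¹ := by
    simpa [Real.log_inv, sub_eq_add_neg] using (Real.summable_log_one_add_of_summable hc.neg).neg
  exact (Real.multipliable_of_summable_log (fun j => inv_pos.2 (sub_pos.2 (hlt j)))
    hlog).hasProd.tendsto_prod_nat.bddAbove_range

section DescendingLists

variable (α : Type*)

/-- The lists of pairs `(k₁, m₁), …, (kₙ, mₙ)` with `m₁ ≥ ⋯ ≥ mₙ`: an index `(k₁, …, kₙ)` together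
with a point `(m₁, …, mₙ)` of the summation domain of its star sum. -/
def descendingLists : Set (List (α × ℕ)) :=
  {L | L.Pairwise fun p q => q.2 ≤ p.2}

/-- The truncation of `descendingLists α` to pairs `(k, m)` with `m < N`, where products over lists
factor into finitely many geometric series. -/
def descendingListsBelow (N : ℕ) : Set (List (α × ℕ)) :=
  {L ∈ descendingLists α | ∀ p ∈ L, p.2 < N}

variable {α}

theorem descendingListsBelow_zero : descendingListsBelow α 0 = {[]} := by
  ext L
  refine ⟨fun hL => List.eq_nil_iff_forall_not_mem.2 fun p hp =>
    absurd (hL.2 p hp) (Nat.not_lt_zero _), ?_⟩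
  rintro rfl
  exact ⟨List.Pairwise.nil, by simp⟩

theorem append_mem_descendingListsBelow_succ {N : ℕ} (as : List α) {L : List (α × ℕ)}
    (hL : L ∈ descendingListsBelow α N) :
    as.map (·, N) ++ L ∈ descendingListsBelow α (N + 1) := by
  refine ⟨List.pairwise_append.2 ⟨?_, hL.1, ?_⟩, ?_⟩
  · exact List.pairwise_map.2 (List.pairwise_of_forall fun _ _ => le_rfl)
  · simp only [List.mem_map]
    rintro _ ⟨a, -, rfl⟩ q hq
    exact (hL.2 q hq).le
  · simp only [List.mem_append, List.mem_map]
    rintro _ (⟨a, -, rfl⟩ | hp)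
    · exact N.lt_succ_self
    · exact (hL.2 _ hp).trans N.lt_succ_self

theorem exists_eq_append_of_mem_descendingListsBelow_succ {N : ℕ} :
    ∀ {L : List (α × ℕ)}, L ∈ descendingListsBelow α (N + 1) →
      ∃ as : List α, ∃ M ∈ descendingListsBelow α N, as.map (·, N) ++ M = L
  | [], _ => ⟨[], [], ⟨List.Pairwise.nil, by simp⟩, rfl⟩
  | (a, j) :: L, ⟨hdesc, hlt⟩ => by
    obtain ⟨hhead, htail⟩ := List.pairwise_cons.1 hdesc
    obtain rfl | hj := (Nat.lt_succ_iff.1 (hlt _ List.mem_cons_self)).eq_or_lt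
    · obtain ⟨as, M, hM, rfl⟩ := exists_eq_append_of_mem_descendingListsBelow_succ
        ⟨htail, fun p hp => hlt p (List.mem_cons_of_mem _ hp)⟩
      exact ⟨a :: as, M, hM, rfl⟩
    · refine ⟨[], (a, j) :: L, ⟨hdesc, ?_⟩, rfl⟩
      simpa [hj] using fun b k hp => (hhead (b, k) hp).trans_lt hj

theorem append_injective_of_mem_descendingListsBelow {N : ℕ} :
    ∀ {as bs : List α} {L M : List (α × ℕ)}, L ∈ descendingListsBelow α N →
      M ∈ descendingListsBelow α N → as.map (·, N) ++ L = bs.map (·, N) ++ M → as = bs ∧ L = M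
  | [], [], _, _, _, _, h => ⟨rfl, h⟩
  | a :: as, b :: bs, L, M, hL, hM, h => by
    simp only [List.map_cons, List.cons_append, List.cons.injEq, Prod.mk.injEq, and_true] at h
    obtain ⟨rfl, rfl⟩ := append_injective_of_mem_descendingListsBelow hL hM h.2
    exact ⟨by rw [h.1], rfl⟩
  | [], b :: _, _, _, hL, _, h => by
    subst h
    exact absurd (hL.2 (b, N) (by simp)) (lt_irrefl N)
  | a :: _, [], _, _, _, hM, h => by
    subst h
    exact absurd (hM.2 (a, N) (by simp)) (lt_irrefl N)

/-- The unique splitting of a descending list below `N + 1` into its constant block at the value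
`N`, encoded by the list of its first components, and a descending list below `N`. -/
noncomputable def blockAppendEquiv (N : ℕ) :
    List α × descendingListsBelow α N ≃ descendingListsBelow α (N + 1) :=
  Equiv.ofBijective (fun p => ⟨_, append_mem_descendingListsBelow_succ p.1 p.2.2⟩) <| by
    refine ⟨fun p q h => ?_, fun L => ?_⟩
    · obtain ⟨has, hM⟩ :=
        append_injective_of_mem_descendingListsBelow p.2.2 q.2.2 (Subtype.ext_iff.1 h)
      exact Prod.ext has (Subtype.ext hM)
    · obtain ⟨as, M, hM, h⟩ := exists_eq_append_of_mem_descendingListsBelow_succ L.2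
      exact ⟨(as, ⟨M, hM⟩), Subtype.ext h⟩

theorem coe_blockAppendEquiv (N : ℕ) (p : List α × descendingListsBelow α N) :
    (blockAppendEquiv N p : List (α × ℕ)) = p.1.map (·, N) ++ p.2 :=
  rfl

variable {𝕜 : Type*} [NormedField 𝕜] {f : α × ℕ → 𝕜}

theorem summable_norm_and_hasSum_descendingListsBelow [CompleteSpace 𝕜]
    (hf : ∀ j, Summable fun a => ‖f (a, j)‖) (hlt : ∀ j, ∑' a, ‖f (a, j)‖ < 1) (N : ℕ) :
    (Summable fun L : descendingListsBelow α N => ‖(L.1.map f).prod‖) ∧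
      HasSum (fun L : descendingListsBelow α N => (L.1.map f).prod)
        (∏ j ∈ Finset.range N, (1 - ∑' a, f (a, j))⁻¹) := by
  induction N with
  | zero =>
    rw [descendingListsBelow_zero]
    exact ⟨Summable.of_finite, by
      simpa using hasSum_fintype fun L : ({[]} : Set (List (α × ℕ))) => (L.1.map f).prod⟩
  | succ N ih =>
    have happend (p : List α × descendingListsBelow α N) : ((blockAppendEquiv N p).1.map f).prod
        = (p.1.map fun a => f (a, N)).prod * (p.2.1.map f).prod := by
      simp [coe_blockAppendEquiv, Function.comp_def]
    rw [← (blockAppendEquiv N).summable_iff, ← (blockAppendEquiv N).hasSum_iff,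
      Finset.prod_range_succ_comm]
    simpa only [Function.comp_def, happend] using
      summable_norm_and_hasSum_mul (summable_norm_and_hasSum_list_prod (hf N) (hlt N)) ih

theorem eventually_mem_descendingListsBelow {L : List (α × ℕ)} (hL : L ∈ descendingLists α) :
    ∀ᶠ N in atTop, L ∈ descendingListsBelow α N := by
  obtain ⟨B, hB⟩ := (L.map Prod.snd).finite_toSet.bddAbove
  filter_upwards [eventually_gt_atTop B] with N hN
  exact ⟨hL, fun p hp => (hB (List.mem_map_of_mem hp)).trans_lt hN⟩

theorem summable_norm_descendingLists (hf : ∀ j, Summable fun a => ‖f (a, j)‖)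
    (hlt : ∀ j, ∑' a, ‖f (a, j)‖ < 1) (hcol : Summable fun j => ∑' a, ‖f (a, j)‖) :
    Summable fun L : descendingLists α => ‖(L.1.map f).prod‖ := by
  obtain ⟨B, hB⟩ := bddAbove_range_prod_one_sub_inv hcol hlt
  refine summable_of_sum_le (c := B) (fun _ => norm_nonneg _) fun s => ?_
  obtain ⟨N, hN⟩ := ((eventually_all_finset s).2 fun L _ =>
    eventually_mem_descendingListsBelow L.2).exists
  obtain ⟨-, hbelow⟩ := summable_norm_and_hasSum_descendingListsBelow (f := fun p => ‖f p‖)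
    (by simpa using hf) (by simpa using hlt) N
  let φ : List (α × ℕ) → ℝ := fun L => ‖(L.map f).prod‖
  have hφ (L : List (α × ℕ)) : (L.map (‖f ·‖)).prod = φ L := by
    simp [φ, List.norm_prod, Function.comp_def]
  simp only [hφ] at hbelow
  have hind : HasSum ((descendingListsBelow α N).indicator φ)
      (∏ j ∈ Finset.range N, (1 - ∑' a, ‖f (a, j)‖)⁻¹) := hasSum_subtype_iff_indicator.1 hbelow
  calc ∑ L ∈ s, φ L
      = ∑ L ∈ s.map (.subtype _), (descendingListsBelow α N).indicator φ L := by
        rw [Finset.sum_map]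
        exact Finset.sum_congr rfl fun L hL => (Set.indicator_of_mem (hN L hL) φ).symm
    _ ≤ ∏ j ∈ Finset.range N, (1 - ∑' a, ‖f (a, j)‖)⁻¹ :=
        sum_le_hasSum _ (fun L _ => Set.indicator_nonneg (fun _ _ => norm_nonneg _) L) hind
    _ ≤ B := hB (Set.mem_range_self N)

theorem tendsto_prod_one_sub_inv_tsum_descendingLists [CompleteSpace 𝕜]
    (hf : ∀ j, Summable fun a => ‖f (a, j)‖) (hlt : ∀ j, ∑' a, ‖f (a, j)‖ < 1)
    (hcol : Summable fun j => ∑' a, ‖f (a, j)‖) :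
    Tendsto (fun N => ∏ j ∈ Finset.range N, (1 - ∑' a, f (a, j))⁻¹) atTop
      (𝓝 (∑' L : descendingLists α, (L.1.map f).prod)) := by
  set φ : List (α × ℕ) → 𝕜 := fun L => (L.map f).prod
  have hsum (N : ℕ) : ∏ j ∈ Finset.range N, (1 - ∑' a, f (a, j))⁻¹ =
      ∑' L, (descendingListsBelow α N).indicator φ L :=
    (summable_norm_and_hasSum_descendingListsBelow hf hlt N).2.tsum_eq.symm.trans (tsum_subtype _ φ)
  have hbound : Summable fun L => ‖(descendingLists α).indicator φ L‖ := by
    have hsub : Summable ((fun L => ‖φ L‖) ∘ (↑) : descendingLists α → ℝ) :=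
      summable_norm_descendingLists hf hlt hcol
    simpa only [norm_indicator_eq_indicator_norm] using summable_subtype_iff_indicator.1 hsub
  simp only [hsum]
  rw [show (fun L : descendingLists α => (L.1.map f).prod) = fun L => φ L.1 from rfl, tsum_subtype]
  refine tendsto_tsum_of_dominated_convergence hbound (fun L => ?_)
    (Eventually.of_forall fun N L => ?_)
  · by_cases hL : L ∈ descendingLists α
    · refine tendsto_const_nhds.congr' ?_
      filter_upwards [eventually_mem_descendingListsBelow hL] with N hN
      rw [Set.indicator_of_mem hL, Set.indicator_of_mem hN]
    · rw [Set.indicator_of_notMem hL]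
      refine tendsto_const_nhds.congr fun N => ?_
      rw [Set.indicator_of_notMem fun h => hL h.1]
  · exact norm_indicator_le_of_subset (fun L h => h.1) _ _

end DescendingLists

/-- The list of pairs `(k₁, m₁), …, (kₙ, mₙ)` obtained from a list `K` and a tuple `m` of matching
length; it converts between the tuples of `multTStar` and the lists of `descendingLists`. -/
def zipTuple {α β : Type*} (x : Σ K : List α, Fin K.length → β) : List (α × β) :=
  List.ofFn fun i => (x.1.get i, x.2 i)

theorem map_fst_zipTuple {α β : Type*} (x : Σ K : List α, Fin K.length → β) :
    (zipTuple x).map Prod.fst = x.1 := by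
  rw [zipTuple, List.map_ofFn]
  exact List.ofFn_get x.1

theorem zipTuple_bijective {α β : Type*} : Function.Bijective (zipTuple (α := α) (β := β)) := by
  refine ⟨fun ⟨K, m⟩ ⟨K', m'⟩ h => ?_, fun L =>
    ⟨⟨L.map Prod.fst, fun i => (L.get (i.cast (by simp))).2⟩, ?_⟩⟩
  · obtain rfl : K = K' := by simpa only [map_fst_zipTuple] using congrArg (List.map Prod.fst) h
    have hm : m = m' := funext fun i => congrArg Prod.snd (congrFun (List.ofFn_injective h) i)
    rw [hm]
  · exact List.ext_get (by simp [zipTuple]) (by simp [zipTuple])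

theorem zipTuple_mem_descendingLists {α : Type*} {x : Σ K : List α, Fin K.length → ℕ} :
    zipTuple x ∈ descendingLists α ↔ ∀ i j : Fin x.1.length, i < j → x.2 j ≤ x.2 i := by
  simp [descendingLists, zipTuple, List.pairwise_ofFn]

theorem prod_map_zipTuple {α β M : Type*} [CommMonoid M] (f : α × β → M)
    (x : Σ K : List α, Fin K.length → β) :
    ((zipTuple x).map f).prod = ∏ i, f (x.1.get i, x.2 i) := by
  simp [zipTuple, List.map_ofFn, List.prod_ofFn]

theorem hasSum_tsum_antitone_tuples {α 𝕜 : Type*} [NormedField 𝕜] [CompleteSpace 𝕜] {f : α × ℕ → 𝕜}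
    (hf : Summable fun L : descendingLists α => (L.1.map f).prod) :
    HasSum (fun K : List α => ∑' m : Fin K.length → ℕ,
        if ∀ i j : Fin K.length, i < j → m j ≤ m i then ∏ i, f (K.get i, m i) else 0)
      (∑' L : descendingLists α, (L.1.map f).prod) := by
  have hlist : HasSum ((descendingLists α).indicator fun L => (L.map f).prod)
      (∑' L : descendingLists α, (L.1.map f).prod) :=
    hasSum_subtype_iff_indicator.1 hf.hasSum
  have hzip : HasSum (fun x : Σ K : List α, Fin K.length → ℕ =>
      if ∀ i j : Fin x.1.length, i < j → x.2 j ≤ x.2 i then ∏ i, f (x.1.get i, x.2 i) else 0)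
      (∑' L : descendingLists α, (L.1.map f).prod) := by
    refine ((Equiv.ofBijective _ zipTuple_bijective).hasSum_iff.2 hlist).congr_fun fun x => ?_
    classical
    simp only [Function.comp_apply, Equiv.ofBijective_apply, Set.indicator_apply,
      zipTuple_mem_descendingLists, prod_map_zipTuple]
  exact hzip.sigma fun K => (hzip.summable.sigma_factor K).hasSum

section Weight

variable {𝕜 : Type*} [RCLike 𝕜]

/-- The contribution of one entry `k` with summation variable `m`, where `p = (k, m)`, to the
generating function in maximal height: `u ^ (k - 2) * w / m ^ k` if `k ≥ 2` and `m` is odd,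
and `0` otherwise. -/
noncomputable def heightWeight (u w : 𝕜) (p : ℕ × ℕ) : 𝕜 :=
  if 2 ≤ p.1 ∧ Odd p.2 then u ^ (p.1 - 2) * w * ((p.2 : 𝕜) ^ p.1)⁻¹ else 0

theorem norm_heightWeight (u w : 𝕜) (p : ℕ × ℕ) :
    ‖heightWeight u w p‖ = heightWeight ‖u‖ ‖w‖ p := by
  simp [heightWeight, apply_ite norm]

theorem heightWeight_of_even (u w : 𝕜) (k : ℕ) {m : ℕ} (hm : Even m) :
    heightWeight u w (k, m) = 0 := by
  simp [heightWeight, hm]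

theorem hasSum_heightWeight {u : 𝕜} (hu : ‖u‖ < 1) (w : 𝕜) {m : ℕ} (hm : Odd m) :
    HasSum (fun k => heightWeight u w (k, m)) (w / (m * (m - u))) := by
  have hm1 : (1 : ℝ) ≤ m := mod_cast hm.pos
  have hm0 : (m : 𝕜) ≠ 0 := mod_cast hm.pos.ne'
  have hlt : ‖u / m‖ < 1 := by
    rw [norm_div, RCLike.norm_natCast]
    exact (div_le_self (norm_nonneg u) hm1).trans_lt hu
  have hum : (m : 𝕜) - u ≠ 0 := by
    refine sub_ne_zero.2 fun h => ?_
    rw [← h, RCLike.norm_natCast] at hu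
    linarith
  have hgeom (k : ℕ) : heightWeight u w (k + 2, m) = w / (m : 𝕜) ^ 2 * (u / m) ^ k := by
    simp only [heightWeight, le_add_iff_nonneg_left, zero_le, hm, and_self, if_true,
      Nat.add_sub_cancel, div_pow, pow_add]
    field_simp
  have hinit : ∑ k ∈ Finset.range 2, heightWeight u w (k, m) = 0 := by
    simp [Finset.sum_range_succ, heightWeight]
  have hvalue : w / (m * (m - u)) = w / (m : 𝕜) ^ 2 * (1 - u / m)⁻¹ := by
    field_simp
  rw [← hasSum_nat_add_iff' 2, hinit, sub_zero, hvalue]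
  simpa only [hgeom] using (hasSum_geometric_of_norm_lt_one hlt).mul_left (w / (m : 𝕜) ^ 2)

theorem summable_norm_heightWeight {u : 𝕜} (hu : ‖u‖ < 1) (w : 𝕜) (m : ℕ) :
    Summable fun k => ‖heightWeight u w (k, m)‖ := by
  simp only [norm_heightWeight]
  obtain hm | hm := m.even_or_odd
  · simpa only [heightWeight_of_even _ _ _ hm] using summable_zero
  · exact (hasSum_heightWeight (by simpa using hu) _ hm).summable

theorem tsum_norm_heightWeight_le {u : 𝕜} (hu : ‖u‖ < 1) (w : 𝕜) (m : ℕ) :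
    ∑' k, ‖heightWeight u w (k, m)‖ ≤ ‖w‖ / (1 - ‖u‖) * (1 / (m : ℝ) ^ 2) := by
  have hpos : 0 < 1 - ‖u‖ := sub_pos.2 hu
  simp only [norm_heightWeight]
  obtain hm | hm := m.even_or_odd
  · simp only [heightWeight_of_even _ _ _ hm, tsum_zero]
    exact mul_nonneg (div_nonneg (norm_nonneg w) hpos.le) (by positivity)
  · have hm1 : (1 : ℝ) ≤ m := mod_cast hm.pos
    rw [(hasSum_heightWeight (by simpa using hu) _ hm).tsum_eq, div_mul_div_comm, mul_one]
    refine div_le_div_of_nonneg_left (norm_nonneg w) (mul_pos hpos (by positivity)) ?_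
    have hmu : ‖u‖ * m ≤ ‖u‖ * m ^ 2 :=
      mul_le_mul_of_nonneg_left (le_self_pow₀ hm1 two_ne_zero) (norm_nonneg u)
    linarith

theorem tsum_norm_heightWeight_lt_one {u w : 𝕜} (h : ‖u‖ + ‖w‖ < 1) (m : ℕ) :
    ∑' k, ‖heightWeight u w (k, m)‖ < 1 := by
  have hu : ‖u‖ < 1 := by linarith [norm_nonneg w]
  have hpos : 0 < 1 - ‖u‖ := sub_pos.2 hu
  have hm : 1 / (m : ℝ) ^ 2 ≤ 1 := by
    obtain rfl | hm := m.eq_zero_or_pos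
    · simp
    · exact div_le_one_of_le₀ (one_le_pow₀ (mod_cast hm)) (by positivity)
  calc ∑' k, ‖heightWeight u w (k, m)‖
      ≤ ‖w‖ / (1 - ‖u‖) * (1 / (m : ℝ) ^ 2) := tsum_norm_heightWeight_le hu w m
    _ ≤ ‖w‖ / (1 - ‖u‖) := mul_le_of_le_one_right (div_nonneg (norm_nonneg w) hpos.le) hm
    _ < 1 := (div_lt_one hpos).2 (by linarith)

theorem summable_tsum_norm_heightWeight {u : 𝕜} (hu : ‖u‖ < 1) (w : 𝕜) :
    Summable fun m => ∑' k, ‖heightWeight u w (k, m)‖ :=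
  .of_nonneg_of_le (fun _ => tsum_nonneg fun _ => norm_nonneg _) (tsum_norm_heightWeight_le hu w)
    ((Real.summable_one_div_nat_pow.2 one_lt_two).mul_left _)

theorem prod_heightWeight (u w : 𝕜) (K : List ℕ) (m : Fin K.length → ℕ) :
    ∏ i, heightWeight u w (K.get i, m i) =
      if (∀ k ∈ K, 2 ≤ k) ∧ ∀ i, Odd (m i) then
        u ^ (K.map (· - 2)).sum * w ^ K.length * ∏ i, ((m i : 𝕜) ^ K.get i)⁻¹ else 0 := by
  have hsum : ∑ i : Fin K.length, (K.get i - 2) = (K.map (· - 2)).sum := by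
    conv_rhs => rw [← List.ofFn_get K, List.map_ofFn, List.sum_ofFn]
    rfl
  simp only [heightWeight, Fintype.prod_ite_zero, Finset.prod_mul_distrib,
    Finset.prod_pow_eq_pow_sum, hsum, forall_and, List.forall_mem_iff_get, Finset.prod_const,
    Finset.card_univ, Fintype.card_fin]

end Weight

theorem tsum_antitone_prod_heightWeight (u w : ℂ) (K : List ℕ) :
    (∑' m : Fin K.length → ℕ, if ∀ i j : Fin K.length, i < j → m j ≤ m i then
        ∏ i, heightWeight u w (K.get i, m i) else 0) =
      if ∀ k ∈ K, 2 ≤ k then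
        multTStar K * u ^ (K.map (· - 2)).sum * w ^ K.length else 0 := by
  simp only [prod_heightWeight]
  split_ifs with hK
  · rw [multTStar, Complex.ofReal_tsum, mul_assoc, ← tsum_mul_right]
    refine tsum_congr fun m => ?_
    by_cases hodd : ∀ i, Odd (m i) <;>
      by_cases hdesc : ∀ i j : Fin K.length, i < j → m j ≤ m i
    · simp only [if_pos hdesc, if_pos (And.intro hodd hdesc), if_pos (And.intro hK hodd)]
      push_cast
      ring
    all_goals simp [hodd, hdesc]
  · simp only [hK, false_and, if_false, ite_self, tsum_zero]

theorem multTStar_nil : multTStar [] = 1 := by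
  simp [multTStar]

theorem admissible_height_eq_depth_iff {K : List ℕ} (hK : K ≠ []) :
    Admissible K ∧ K.countP (fun i => decide (2 ≤ i)) = K.length ↔ ∀ k ∈ K, 2 ≤ k := by
  rw [List.countP_eq_length]
  simp only [decide_eq_true_eq, and_iff_right_iff_imp]
  refine fun h => ⟨fun k hk => one_le_two.trans (h k hk), ?_⟩
  obtain ⟨k, K, rfl⟩ := List.exists_cons_of_ne_nil hK
  exact h k List.mem_cons_self

theorem sum_eq_sum_map_sub_two_add {K : List ℕ} (hK : ∀ k ∈ K, 2 ≤ k) :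
    K.sum = (K.map (· - 2)).sum + 2 * K.length := by
  induction K with
  | nil => rfl
  | cons k K ih =>
    obtain ⟨hk, hK⟩ := List.forall_mem_cons.1 hK
    simp only [List.sum_cons, List.map_cons, List.length_cons]
    have := ih hK
    lia

theorem G0hStar_max_height (p n : ℕ) :
    G0hStar (p + 2 * n + 2) (n + 1) (n + 1) =
      ∑' K : List ℕ, if (∀ k ∈ K, 2 ≤ k) ∧ (K.map (· - 2)).sum = p ∧ K.length = n + 1 then
        multTStar K else 0 := by
  refine tsum_congr fun K => if_congr ?_ rfl rfl
  constructor
  · rintro ⟨hadm, hwt, hlen, hht⟩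
    have hK := (admissible_height_eq_depth_iff (List.ne_nil_of_length_eq_add_one hlen)).1
      ⟨hadm, hht.trans hlen.symm⟩
    have := sum_eq_sum_map_sub_two_add hK
    exact ⟨hK, by lia, hlen⟩
  · rintro ⟨hK, hwt, hlen⟩
    obtain ⟨hadm, hht⟩ :=
      (admissible_height_eq_depth_iff (List.ne_nil_of_length_eq_add_one hlen)).2 hK
    have := sum_eq_sum_map_sub_two_add hK
    exact ⟨hadm, by lia, hlen, hht.trans hlen⟩

theorem hasSum_G0hStar_max_height {u w : ℂ}
    (hsum : Summable fun L : descendingLists ℕ => (L.1.map (heightWeight u w)).prod) :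
    HasSum (fun p : ℕ × ℕ =>
        (G0hStar (p.1 + 2 * p.2 + 2) (p.2 + 1) (p.2 + 1) : ℂ) * u ^ p.1 * w ^ (p.2 + 1))
      ((∑' L : descendingLists ℕ, (L.1.map (heightWeight u w)).prod) - 1) := by
  classical
  have hall := hasSum_tsum_antitone_tuples hsum
  simp only [tsum_antitone_prod_heightWeight] at hall
  -- The empty list contributes the term `1`. It has to be removed first, since the truncated
  -- subtraction in `K.length - 1` would place it among the indices of depth one.
  have hne := (hall.update [] 0).tsum_fiberwise
    fun K : List ℕ => ((K.map (· - 2)).sum, K.length - 1)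
  have hnil : 0 - (if ∀ k ∈ ([] : List ℕ), 2 ≤ k then
      (multTStar [] : ℂ) * u ^ (([] : List ℕ).map (· - 2)).sum * w ^ ([] : List ℕ).length else 0) =
      -1 := by
    simp [multTStar_nil]
  rw [hnil, neg_add_eq_sub] at hne
  refine hne.congr_fun fun ⟨p, n⟩ => ?_
  rw [G0hStar_max_height, Complex.ofReal_tsum, mul_assoc, ← tsum_mul_right, tsum_subtype]
  refine tsum_congr fun K => ?_
  cases K with
  | nil => simp [Set.indicator_apply]
  | cons k K =>
    rw [Set.indicator_apply, Function.update_of_ne (List.cons_ne_nil k K)]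
    simp only [Set.mem_preimage, Set.mem_singleton_iff, Prod.mk.injEq, List.length_cons,
      Nat.add_sub_cancel, Nat.add_right_cancel_iff]
    by_cases hfiber : ((k :: K).map (· - 2)).sum = p ∧ K.length = n
    · obtain ⟨rfl, rfl⟩ := hfiber
      simp only [and_self, and_true, if_true, mul_assoc]
      split_ifs <;> simp
    · simp only [hfiber, and_false, if_false, Complex.ofReal_zero, zero_mul]

theorem hasSum_neg_log_one_sub_sub_self {z : ℂ} (hz : ‖z‖ < 1) :
    HasSum (fun n : ℕ => z ^ (n + 2) / (n + 2)) (-Complex.log (1 - z) - z) := by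
  simpa [Finset.sum_range_succ] using
    (hasSum_nat_add_iff' 2).2 (Complex.hasSum_taylorSeries_neg_log hz)

/-- The generating series `∑_{n ≥ 2} t(n) zⁿ / n` of the single `t`-values. -/
noncomputable def tLogSeries (z : ℂ) : ℂ :=
  ∑' n : ℕ, (tval (n + 2) : ℂ) / (n + 2) * z ^ (n + 2)

theorem norm_two_mul_natCast_add_one (j : ℕ) : ‖(2 * j + 1 : ℂ)‖ = 2 * j + 1 := by
  exact_mod_cast Complex.norm_natCast (2 * j + 1)

theorem summable_div_odd_pow_div {z : ℂ} (hz : ‖z‖ < 1) :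
    Summable fun p : ℕ × ℕ => (z / (2 * p.2 + 1)) ^ (p.1 + 2) / (p.1 + 2) := by
  have hodd : Summable fun j : ℕ => 1 / (2 * j + 1 : ℝ) ^ 2 := by
    have hinj : Function.Injective fun j : ℕ => 2 * j + 1 := fun i j h => by simpa using h
    simpa [Function.comp_def] using
      (Real.summable_one_div_nat_pow.2 one_lt_two).comp_injective hinj
  have hgeom := summable_geometric_of_lt_one (norm_nonneg z) hz
  refine .of_norm_bounded (hgeom.mul_of_nonneg hodd (fun _ => by positivity)
    fun _ => by positivity) fun ⟨n, j⟩ => ?_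
  have hn : ‖(n + 2 : ℂ)‖ = n + 2 := by
    exact_mod_cast Complex.norm_natCast (n + 2)
  calc ‖(z / (2 * j + 1)) ^ (n + 2) / (n + 2)‖
      = ‖z‖ ^ (n + 2) / (2 * j + 1) ^ (n + 2) / (n + 2) := by
        rw [norm_div, norm_pow, norm_div, norm_two_mul_natCast_add_one, hn,
          div_pow]
    _ ≤ ‖z‖ ^ (n + 2) / (2 * j + 1) ^ (n + 2) :=
        div_le_self (by positivity) (by linarith [n.cast_nonneg (α := ℝ)])
    _ ≤ ‖z‖ ^ n / (2 * j + 1) ^ 2 := by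
        gcongr ?_ / ?_
        · exact pow_le_pow_of_le_one (norm_nonneg z) hz.le (by lia)
        · exact pow_le_pow_right₀ (by linarith [j.cast_nonneg (α := ℝ)]) (by lia)
    _ = ‖z‖ ^ n * (1 / (2 * j + 1) ^ 2) := (mul_one_div _ _).symm

theorem hasSum_tval_div_mul_pow {z : ℂ} (hz : ‖z‖ < 1) :
    HasSum (fun n : ℕ => (tval (n + 2) : ℂ) / (n + 2) * z ^ (n + 2))
      (∑' p : ℕ × ℕ, (z / (2 * p.2 + 1)) ^ (p.1 + 2) / (p.1 + 2)) := by
  have hfamily := summable_div_odd_pow_div hz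
  refine hfamily.hasSum.prod_fiberwise fun n => ?_
  have hrow : (tval (n + 2) : ℂ) / (n + 2) * z ^ (n + 2) =
      ∑' j : ℕ, (z / (2 * j + 1)) ^ (n + 2) / (n + 2) := by
    rw [tval, Complex.ofReal_tsum, div_mul_eq_mul_div, ← tsum_mul_right, ← tsum_div_const]
    refine tsum_congr fun j => ?_
    rw [div_pow]
    push_cast
    ring
  rw [hrow]
  exact (hfamily.prod_factor n).hasSum

theorem hasSum_tLogSeries {z : ℂ} (hz : ‖z‖ < 1) :
    HasSum (fun n : ℕ => (tval (n + 2) : ℂ) / (n + 2) * z ^ (n + 2)) (tLogSeries z) :=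
  (hasSum_tval_div_mul_pow hz).summable.hasSum

theorem norm_div_two_mul_add_one_lt_one {z : ℂ} (hz : ‖z‖ < 1) (j : ℕ) :
    ‖z / (2 * j + 1)‖ < 1 := by
  rw [norm_div, norm_two_mul_natCast_add_one]
  exact (div_le_self (norm_nonneg z) (by linarith [j.cast_nonneg (α := ℝ)])).trans_lt hz

theorem hasSum_neg_log_tLogSeries {z : ℂ} (hz : ‖z‖ < 1) :
    HasSum (fun j : ℕ => -Complex.log (1 - z / (2 * j + 1)) - z / (2 * j + 1))
      (tLogSeries z) := by
  rw [tLogSeries, (hasSum_tval_div_mul_pow hz).tsum_eq]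
  have hswap : HasSum (fun p : ℕ × ℕ => (z / (2 * p.1 + 1)) ^ (p.2 + 2) / (p.2 + 2))
      (∑' p : ℕ × ℕ, (z / (2 * p.2 + 1)) ^ (p.1 + 2) / (p.1 + 2)) :=
    (Equiv.prodComm ℕ ℕ).hasSum_iff.2 (summable_div_odd_pow_div hz).hasSum
  have hcol (j : ℕ) : HasSum (fun n : ℕ => (z / (2 * j + 1)) ^ (n + 2) / (n + 2))
      (-Complex.log (1 - z / (2 * j + 1)) - z / (2 * j + 1)) :=
    hasSum_neg_log_one_sub_sub_self (norm_div_two_mul_add_one_lt_one hz j)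
  exact hswap.prod_fiberwise hcol

theorem norm_lt_one_of_sq_eq {𝕜 : Type*} [NormedField 𝕜] {u w x : 𝕜} (h : ‖u‖ + ‖w‖ < 1)
    (hx : x ^ 2 = u * x + w) : ‖x‖ < 1 := by
  by_contra! hx1
  have hsq : ‖x‖ ^ 2 ≤ ‖u‖ * ‖x‖ + ‖w‖ := by
    rw [← norm_pow, hx, ← norm_mul]
    exact norm_add_le _ _
  nlinarith [mul_le_mul_of_nonneg_left hx1 (norm_nonneg w)]

theorem exp_neg_log_one_sub_roots {x y u w m : ℂ} (hm : m ≠ 0) (hx : ‖x / m‖ < 1)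
    (hy : ‖y / m‖ < 1) (hu : ‖u / m‖ < 1) (hadd : x + y = u) (hmul : x * y = -w) :
    Complex.exp ((-Complex.log (1 - x / m) - x / m) + (-Complex.log (1 - y / m) - y / m) -
        (-Complex.log (1 - u / m) - u / m)) = (1 - w / (m * (m - u)))⁻¹ := by
  have one_sub_ne {z : ℂ} (hz : ‖z / m‖ < 1) : 1 - z / m ≠ 0 := by
    refine sub_ne_zero.2 fun h => ?_
    rw [← h, norm_one] at hz
    exact lt_irrefl _ hz
  have hcancel : (-Complex.log (1 - x / m) - x / m) + (-Complex.log (1 - y / m) - y / m) -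
      (-Complex.log (1 - u / m) - u / m) =
        Complex.log (1 - u / m) - (Complex.log (1 - x / m) + Complex.log (1 - y / m)) := by
    rw [← hadd]
    ring
  have hum : m - u ≠ 0 := by
    have := one_sub_ne hu
    rwa [one_sub_div hm, div_ne_zero_iff, and_iff_left hm] at this
  rw [hcancel, Complex.exp_sub, Complex.exp_add, Complex.exp_log (one_sub_ne hu),
    Complex.exp_log (one_sub_ne hx), Complex.exp_log (one_sub_ne hy), ← inv_div]
  congr 1
  rw [div_eq_iff (one_sub_ne hu)]
  field_simp
  linear_combination hmul - m * hadd

theorem hasProd_one_sub_tsum_heightWeight_inv {u w x y : ℂ} (hu : ‖u‖ < 1) (hx : ‖x‖ < 1)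
    (hy : ‖y‖ < 1) (hadd : x + y = u) (hmul : x * y = -w) :
    HasProd (fun m => (1 - ∑' k, heightWeight u w (k, m))⁻¹)
      (Complex.exp (tLogSeries x + tLogSeries y - tLogSeries u)) := by
  have hinj : Function.Injective fun j : ℕ => 2 * j + 1 := fun i j h => by simpa using h
  rw [← hinj.hasProd_iff fun m hm => ?_]
  · refine (((hasSum_neg_log_tLogSeries hx).add (hasSum_neg_log_tLogSeries hy)).sub
      (hasSum_neg_log_tLogSeries hu)).cexp.congr_fun fun j => ?_
    have hcol := (hasSum_heightWeight hu w (odd_two_mul_add_one j)).tsum_eq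
    push_cast at hcol
    rw [Function.comp_apply, Function.comp_apply, hcol]
    have hj : (2 * j + 1 : ℂ) ≠ 0 := mod_cast (2 * j).succ_ne_zero
    exact (exp_neg_log_one_sub_roots hj (norm_div_two_mul_add_one_lt_one hx j)
      (norm_div_two_mul_add_one_lt_one hy j) (norm_div_two_mul_add_one_lt_one hu j) hadd hmul).symm
  · have hm : Even m := by
      rw [← Nat.not_odd_iff_even]
      rintro ⟨j, rfl⟩
      exact hm ⟨j, rfl⟩
    simp [heightWeight_of_even _ _ _ hm]

theorem maximal_height_multiple_t_star_general {u w x y : ℂ} (h : ‖u‖ + ‖w‖ < 1)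
    (hadd : x + y = u) (hmul : x * y = -w) :
    Summable (fun p : ℕ × ℕ =>
        (G0hStar (p.1 + 2 * p.2 + 2) (p.2 + 1) (p.2 + 1) : ℂ) * u ^ p.1 * w ^ (p.2 + 1)) ∧
      Summable (fun n : ℕ => (tval (n + 2) : ℂ) / (n + 2) *
        (x ^ (n + 2) + y ^ (n + 2) - u ^ (n + 2))) ∧
      1 + ∑' p : ℕ × ℕ,
          (G0hStar (p.1 + 2 * p.2 + 2) (p.2 + 1) (p.2 + 1) : ℂ) * u ^ p.1 * w ^ (p.2 + 1) =
        Complex.exp (∑' n : ℕ, (tval (n + 2) : ℂ) / (n + 2) *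
          (x ^ (n + 2) + y ^ (n + 2) - u ^ (n + 2))) := by
  have hu : ‖u‖ < 1 := by linarith [norm_nonneg w]
  have hx : ‖x‖ < 1 := norm_lt_one_of_sq_eq h (by linear_combination x * hadd - hmul)
  have hy : ‖y‖ < 1 := norm_lt_one_of_sq_eq h (by linear_combination y * hadd - hmul)
  have hf := summable_norm_heightWeight hu w
  have hlt := tsum_norm_heightWeight_lt_one h
  have hcol := summable_tsum_norm_heightWeight hu w
  have hG := hasSum_G0hStar_max_height (summable_norm_descendingLists hf hlt hcol).of_norm
  have hexp : HasSum (fun n : ℕ => (tval (n + 2) : ℂ) / (n + 2) *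
      (x ^ (n + 2) + y ^ (n + 2) - u ^ (n + 2))) (tLogSeries x + tLogSeries y - tLogSeries u) := by
    simpa only [mul_add, mul_sub] using
      ((hasSum_tLogSeries hx).add (hasSum_tLogSeries hy)).sub (hasSum_tLogSeries hu)
  refine ⟨hG.summable, hexp.summable, ?_⟩
  rw [hG.tsum_eq, hexp.tsum_eq, add_sub_cancel]
  exact tendsto_nhds_unique (tendsto_prod_one_sub_inv_tsum_descendingLists hf hlt hcol)
    (hasProd_one_sub_tsum_heightWeight_inv hu hx hy hadd hmul).tendsto_prod_nat

/-- Generating function of sums of multiple `t`-star values of maximal height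
(Corollary 2.4): `1 + ∑ G₀*(k,n,n) u^(k-2n) w^n = exp(∑_{n≥2} (t(n)/n)((x*)ⁿ + (y*)ⁿ - uⁿ))`
where `x* + y* = u` and `x*y* = -w`. -/
theorem maximal_height_multiple_t_star :
    ∃ δ > (0 : ℝ), ∀ u w : ℝ, |u| < δ → |w| < δ →
      ∀ xs ys : ℂ, xs + ys = (u : ℂ) → xs * ys = -(w : ℂ) →
        Summable (fun p : ℕ × ℕ =>
        G0hStar (p.1 + 2 * p.2 + 2) (p.2 + 1) (p.2 + 1) * u ^ p.1 * w ^ (p.2 + 1)) ∧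
        Summable (fun n : ℕ => ((tval (n + 2) : ℂ) / (n + 2)) *
          (xs ^ (n + 2) + ys ^ (n + 2) - (u : ℂ) ^ (n + 2))) ∧
        ((1 + (∑' p : ℕ × ℕ,
            G0hStar (p.1 + 2 * p.2 + 2) (p.2 + 1) (p.2 + 1) * u ^ p.1 * w ^ (p.2 + 1)) : ℝ) : ℂ)
          = Complex.exp (∑' n : ℕ, ((tval (n + 2) : ℂ) / (n + 2)) *
              (xs ^ (n + 2) + ys ^ (n + 2) - (u : ℂ) ^ (n + 2))) := by
  refine ⟨1 / 2, one_half_pos, fun u w hu hw xs ys hadd hmul => ?_⟩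
  have huw : ‖(u : ℂ)‖ + ‖(w : ℂ)‖ < 1 := by
    rw [Complex.norm_real, Complex.norm_real]
    exact (add_lt_add hu hw).trans_eq (add_halves 1)
  exact_mod_cast maximal_height_multiple_t_star_general huw hadd hmul
end

section
/- There exists δ > 0 such that for all real u, w with |u|, |w| < δ, (1 + ∑_{k ≥ 2n, n ≥ 1} G_0(k,n,n) u^{k−2n} w^n) · (1 + ∑_{k ≥ 2n, n ≥ 1} (−1)^n G_0^*(k,n,n) u^{k−2n} w^n) = 1, both series converging absolutely. -/
open scoped BigOperators

/-!
Attach to a pair `(m, k)` with `m` odd the weight `x k / m ^ k`. Expanding, `∑ t(K) ∏ x(kᵢ)` becomes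
the sum of the weights of all words in such pairs whose `m`-entries strictly decrease, and
`∑ t*(K) ∏ (-x(kᵢ))` the sum, with the sign of the length, over all words whose `m`-entries weakly
decrease. In the product of the two sums, the larger of the two leading letters can be moved from
one word to the other, which flips the sign, so only the pair of empty words survives. Taking
`x k = w u ^ (k - 2)` for `k ≥ 2` and `x k = 0` otherwise selects the indices of maximal height.
-/

open Function Set

section ListProducts

variable {α R : Type*}

lemma hasSum_prod_fin {f : α → ℝ} {a : ℝ} (hf₀ : ∀ x, 0 ≤ f x) (hf : HasSum f a) (n : ℕ) :
    HasSum (fun v : Fin n → α => ∏ i, f (v i)) (a ^ n) := by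
  induction n with
  | zero => simp
  | succ n ih =>
    rw [← (Fin.consEquiv fun _ => α).hasSum_iff, pow_succ']
    have hmul := hf.summable.mul_of_nonneg ih.summable hf₀
      fun v => Finset.prod_nonneg fun i _ => hf₀ (v i)
    simpa [comp_def, Fin.consEquiv, Fin.prod_univ_succ] using hf.mul ih hmul

lemma summable_list_prod {f : α → ℝ} (hf₀ : ∀ x, 0 ≤ f x) (hf : Summable f)
    (hf₁ : ∑' x, f x < 1) : Summable fun l : List α => (l.map f).prod := by
  have hfin (n : ℕ) := hasSum_prod_fin hf₀ hf.hasSum n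
  rw [← List.equivSigmaTuple.symm.summable_iff]
  have heq : (fun l : List α => (l.map f).prod) ∘ List.equivSigmaTuple.symm =
      fun v : Σ n, Fin n → α => ∏ i, f (v.2 i) := by
    ext v
    simp [List.equivSigmaTuple, List.map_ofFn, List.prod_ofFn]
  rw [heq, summable_sigma_of_nonneg fun _ => Finset.prod_nonneg fun _ _ => hf₀ _]
  refine ⟨fun n => (hfin n).summable, ?_⟩
  simpa only [(hfin _).tsum_eq] using summable_geometric_of_lt_one (tsum_nonneg hf₀) hf₁

variable [NormedCommRing R] [NormOneClass R] {z : α → R}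

lemma summable_norm_list_prod (hz : Summable fun a => ‖z a‖) (hz₁ : ∑' a, ‖z a‖ < 1) :
    Summable fun l : List α => ‖(l.map z).prod‖ :=
  (summable_list_prod (fun _ => norm_nonneg _) hz hz₁).of_nonneg_of_le (fun _ => norm_nonneg _)
    fun l => by simpa [comp_def] using List.norm_prod_le (l.map z)

end ListProducts

section ChainProducts

variable {α R : Type*}

/-- The product of the weights `z` of the letters of a word if consecutive letters of the word are
related by `r`, and `0` otherwise. -/
noncomputable def chainProd [CommRing R] (r : α → α → Prop) (z : α → R) : List α → R :=
  {l | l.IsChain r}.indicator fun l => (l.map z).prod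

/-- The product of the weights `z` of the letters of a word `l` if consecutive letters of `a :: l`
are related by `r`, and `0` otherwise; the weight of `a` is left out. -/
noncomputable def chainProdAfter [CommRing R] (r : α → α → Prop) (z : α → R) (a : α) :
    List α → R :=
  {l | (a :: l).IsChain r}.indicator fun l => (l.map z).prod

section CommRing

variable [CommRing R] (r : α → α → Prop) (z : α → R)

lemma chainProd_nil : chainProd r z [] = 1 := by
  simp [chainProd]

lemma chainProd_cons (a : α) (l : List α) :
    chainProd r z (a :: l) = z a * chainProdAfter r z a l := by
  classical simp [chainProd, chainProdAfter, indicator_apply]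

lemma chainProdAfter_nil (a : α) : chainProdAfter r z a [] = 1 := by
  simp [chainProdAfter]

open Classical in
lemma chainProdAfter_cons (a b : α) (l : List α) :
    chainProdAfter r z a (b :: l) = if r a b then z b * chainProdAfter r z b l else 0 := by
  simp [chainProdAfter, indicator_apply, ite_and]

end CommRing

/-- Puts a letter in front of the first of two words. -/
def consFst (q : α × List α × List α) : List α × List α := (q.1 :: q.2.1, q.2.2)

/-- Puts a letter in front of the second of two words. -/
def consSnd (q : α × List α × List α) : List α × List α := (q.2.1, q.1 :: q.2.2)

lemma consFst_injective : Injective (consFst (α := α)) := by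
  rintro ⟨a, l, l'⟩ ⟨b, k, k'⟩ h
  simp_all [consFst]

lemma consSnd_injective : Injective (consSnd (α := α)) := by
  rintro ⟨a, l, l'⟩ ⟨b, k, k'⟩ h
  simp_all [consSnd]

/-- For `q = (a, l, l')`, the weight of `a :: l` as an `r`-chain times the signed weight of `l'` as
the rest of an `s`-chain beginning with `a`. -/
noncomputable def commonHeadProd [CommRing R] (r s : α → α → Prop) (z : α → R)
    (q : α × List α × List α) : R :=
  z q.1 * chainProdAfter r z q.1 q.2.1 * chainProdAfter s (-z) q.1 q.2.2

section CommRing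

variable [CommRing R] {r s : α → α → Prop} (hrs : ∀ a b, s a b ↔ ¬ r b a) (z : α → R)
include hrs

lemma chainProd_cons_mul_chainProd_neg_cons (a b : α) (l l' : List α) :
    chainProd r z (a :: l) * chainProd s (-z) (b :: l') =
      commonHeadProd r s z (a, l, b :: l') - commonHeadProd r s z (b, a :: l, l') := by
  by_cases hba : r b a
  all_goals
    simp only [chainProd_cons, commonHeadProd, chainProdAfter_cons, hrs, hba, Pi.neg_apply,
      not_true, not_false_iff, if_true, if_false]
    ring

open Classical in
lemma chainProd_mul_chainProd_neg :
    (fun p : List α × List α => chainProd r z p.1 * chainProd s (-z) p.2) =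
      Pi.single ([], []) 1 + extend consFst (commonHeadProd r s z) 0 -
        extend consSnd (commonHeadProd r s z) 0 := by
  funext ⟨l, l'⟩
  have hfst (a k k') := consFst_injective.extend_apply (commonHeadProd r s z) 0 (a, k, k')
  have hsnd (a k k') := consSnd_injective.extend_apply (commonHeadProd r s z) 0 (a, k, k')
  have hfst_nil (k') : extend consFst (commonHeadProd r s z) 0 ([], k') = 0 :=
    extend_apply' _ _ _ (by simp [consFst])
  have hsnd_nil (k) : extend consSnd (commonHeadProd r s z) 0 (k, []) = 0 :=
    extend_apply' _ _ _ (by simp [consSnd])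
  simp only [consFst, consSnd] at hfst hsnd
  rcases l with _ | ⟨a, l⟩ <;> rcases l' with _ | ⟨b, l'⟩
  case cons.cons => simp [hfst, hsnd, chainProd_cons_mul_chainProd_neg_cons hrs]
  all_goals
    simp [hfst, hsnd, hfst_nil, hsnd_nil, chainProd_nil, chainProd_cons, commonHeadProd,
      chainProdAfter_nil]

end CommRing

section NormedCommRing

variable [NormedCommRing R] [NormOneClass R] {z : α → R}

lemma summable_norm_chainProd (r : α → α → Prop) (hz : Summable fun a => ‖z a‖)
    (hz₁ : ∑' a, ‖z a‖ < 1) : Summable fun l => ‖chainProd r z l‖ :=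
  (summable_norm_list_prod hz hz₁).of_nonneg_of_le (fun _ => norm_nonneg _)
    fun l => norm_indicator_le_norm_self _ l

lemma summable_norm_chainProd_neg (r : α → α → Prop) (hz : Summable fun a => ‖z a‖)
    (hz₁ : ∑' a, ‖z a‖ < 1) : Summable fun l => ‖chainProd r (-z) l‖ :=
  summable_norm_chainProd r (by simpa using hz) (by simpa using hz₁)

variable [CompleteSpace R]

lemma summable_commonHeadProd (r s : α → α → Prop) (hz : Summable fun a => ‖z a‖)
    (hz₁ : ∑' a, ‖z a‖ < 1) : Summable (commonHeadProd r s z) := by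
  have hprod : Summable fun p : List α × List α =>
      ‖(p.1.map z).prod‖ * ‖(p.2.map (-z)).prod‖ :=
    (summable_norm_list_prod hz hz₁).mul_of_nonneg
      (summable_norm_list_prod (by simpa using hz) (by simpa using hz₁))
      (fun _ => norm_nonneg _) fun _ => norm_nonneg _
  refine .of_norm_bounded (hprod.comp_injective consFst_injective) fun ⟨a, l, l'⟩ => ?_
  rw [commonHeadProd, ← chainProd_cons]
  exact (norm_mul_le _ _).trans <| mul_le_mul (norm_indicator_le_norm_self _ (a :: l))
    (norm_indicator_le_norm_self _ l') (norm_nonneg _) (norm_nonneg _)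

theorem tsum_chainProd_mul_tsum_chainProd_neg {r s : α → α → Prop}
    (hrs : ∀ a b, s a b ↔ ¬ r b a) (hz : Summable fun a => ‖z a‖) (hz₁ : ∑' a, ‖z a‖ < 1) :
    (∑' l, chainProd r z l) * ∑' l, chainProd s (-z) l = 1 := by
  classical
  have hc := (summable_commonHeadProd r s hz hz₁).hasSum
  have hsum := ((hasSum_pi_single (([], []) : List α × List α) (1 : R)).add
    ((hasSum_extend_zero consFst_injective).2 hc)).sub
      ((hasSum_extend_zero consSnd_injective).2 hc)
  rw [tsum_mul_tsum_of_summable_norm (summable_norm_chainProd r hz hz₁)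
    (summable_norm_chainProd_neg s hz hz₁), chainProd_mul_chainProd_neg hrs]
  exact hsum.tsum_eq.trans (add_sub_cancel_right 1 _)

end NormedCommRing

end ChainProducts

section MultipleTValues

/-- The sum `∑ 1 / (m₁^{k₁} ⋯ mₙ^{kₙ})` over the odd `m₁, …, mₙ` with `R (m i) (m j)` for `i < j`:
the common generalization of `multT` (for `>`) and `multTStar` (for `≥`). -/
noncomputable def multTRel (R : ℕ → ℕ → Prop) (K : List ℕ) : ℝ :=
  ∑' m : Fin K.length → ℕ,
    {m : Fin K.length → ℕ | (∀ i, Odd (m i)) ∧ ∀ i j, i < j → R (m i) (m j)}.indicator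
      (fun m => ∏ i, ((m i : ℝ) ^ K.get i)⁻¹) m

lemma multTRel_gt : multTRel (· > ·) = multT := by
  ext K
  simp only [multTRel, multT, indicator_apply, mem_ofPred_eq, gt_iff_lt]

lemma multTRel_ge : multTRel (· ≥ ·) = multTStar := by
  ext K
  simp only [multTRel, multTStar, indicator_apply, mem_ofPred_eq, ge_iff_le]

lemma multTRel_nil (R : ℕ → ℕ → Prop) : multTRel R [] = 1 := by
  simp [multTRel]

/-- The weight `x k / m ^ k` of the pair `(m, k)` if `m` is odd, and `0` if `m` is even. -/
noncomputable def oddWeight (x : ℕ → ℝ) (p : ℕ × ℕ) : ℝ :=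
  if Odd p.1 then ((p.1 : ℝ) ^ p.2)⁻¹ * x p.2 else 0

lemma oddWeight_neg (x : ℕ → ℝ) : oddWeight (-x) = -oddWeight x := by
  ext p
  simp only [oddWeight, Pi.neg_apply]
  split_ifs <;> simp

lemma prod_oddWeight (x : ℕ → ℝ) {ι : Type*} [Fintype ι] (m k : ι → ℕ) :
    ∏ i, oddWeight x (m i, k i) =
      if ∀ i, Odd (m i) then (∏ i, ((m i : ℝ) ^ k i)⁻¹) * ∏ i, x (k i) else 0 := by
  simp only [oddWeight, Finset.prod_ite_zero, Finset.mem_univ, true_imp_iff,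
    Finset.prod_mul_distrib]

/-- Functions `Fin K.length → α` as the words of pairs whose second entries spell `K`. -/
noncomputable def equivMapSndFiber {α β : Type*} (K : List β) :
    (Fin K.length → α) ≃ (List.map Prod.snd ⁻¹' {K} : Set (List (α × β))) where
  toFun m := ⟨List.ofFn fun i => (m i, K.get i), by simp [List.map_ofFn, comp_def]⟩
  invFun l i := (l.1.get (i.cast (by simp [← show l.1.map Prod.snd = K from l.2]))).1
  left_inv m := by simp
  right_inv := by
    rintro ⟨l, rfl⟩
    exact Subtype.ext <| List.ext_get (by simp) fun n _ _ => by simp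

variable {R : ℕ → ℕ → Prop} [IsTrans ℕ R] {x : ℕ → ℝ}

lemma chainProd_ofFn_oddWeight (K : List ℕ) (m : Fin K.length → ℕ) :
    chainProd (InvImage R Prod.fst) (oddWeight x) (List.ofFn fun i => (m i, K.get i)) =
      {m : Fin K.length → ℕ | (∀ i, Odd (m i)) ∧ ∀ i j, i < j → R (m i) (m j)}.indicator
        (fun m => ∏ i, ((m i : ℝ) ^ K.get i)⁻¹) m * (K.map x).prod := by
  classical
  have : IsTrans (ℕ × ℕ) (InvImage R Prod.fst) := ⟨fun _ _ _ => _root_.trans (r := R)⟩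
  have hx : (K.map x).prod = ∏ i, x (K.get i) := by
    rw [← List.prod_ofFn, ← comp_def, ← List.map_ofFn, List.ofFn_get]
  simp only [chainProd, indicator_apply, mem_ofPred_eq, List.isChain_iff_pairwise,
    List.pairwise_ofFn, List.map_ofFn, List.prod_ofFn, comp_apply, prod_oddWeight, hx, InvImage]
  split_ifs <;> simp_all

lemma tsum_chainProd_oddWeight_fiber (K : List ℕ) :
    ∑' l : (List.map Prod.snd ⁻¹' {K} : Set (List (ℕ × ℕ))),
      chainProd (InvImage R Prod.fst) (oddWeight x) l = multTRel R K * (K.map x).prod := by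
  rw [← (equivMapSndFiber K).tsum_eq, multTRel, ← tsum_mul_right]
  exact tsum_congr (chainProd_ofFn_oddWeight K)

lemma hasSum_multTRel_mul_prod (hx : Summable fun p => ‖oddWeight x p‖)
    (hx₁ : ∑' p, ‖oddWeight x p‖ < 1) :
    HasSum (fun K => multTRel R K * (K.map x).prod)
      (∑' l, chainProd (InvImage R Prod.fst) (oddWeight x) l) := by
  simpa only [tsum_chainProd_oddWeight_fiber] using
    (summable_norm_chainProd (InvImage R Prod.fst) hx hx₁).of_norm.hasSum.tsum_fiberwise
      (List.map Prod.snd)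

theorem tsum_multT_mul_tsum_multTStar_neg (hx : Summable fun p => ‖oddWeight x p‖)
    (hx₁ : ∑' p, ‖oddWeight x p‖ < 1) :
    (∑' K, multT K * (K.map x).prod) * ∑' K, multTStar K * (K.map (-x)).prod = 1 := by
  have hstar := hasSum_multTRel_mul_prod (R := (· ≥ ·)) (x := -x)
    (by simpa [oddWeight_neg] using hx) (by simpa [oddWeight_neg] using hx₁)
  rw [← multTRel_gt, ← multTRel_ge, (hasSum_multTRel_mul_prod hx hx₁).tsum_eq, hstar.tsum_eq,
    oddWeight_neg]
  exact tsum_chainProd_mul_tsum_chainProd_neg (fun a b => by simp [InvImage]) hx hx₁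

lemma norm_oddWeight_le (hx₀ : x 0 = 0) (hx₁ : x 1 = 0) (p : ℕ × ℕ) :
    ‖oddWeight x p‖ ≤ 1 / (p.1 : ℝ) ^ 2 * ‖x p.2‖ := by
  obtain ⟨m, _ | _ | k⟩ := p
  · simp [oddWeight, hx₀]
  · simp [oddWeight, hx₁]
  by_cases hm : Odd m
  · have hm₁ : (1 : ℝ) ≤ m := mod_cast hm.pos
    simp only [oddWeight, hm, if_true, norm_mul, norm_inv, norm_pow, RCLike.norm_natCast, one_div]
    gcongr
    · omega
  · simp only [oddWeight, hm, if_false, norm_zero]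
    positivity

lemma hasSum_inv_sq_mul_norm (hx : Summable fun k => ‖x k‖) :
    HasSum (fun p : ℕ × ℕ => 1 / (p.1 : ℝ) ^ 2 * ‖x p.2‖) (Real.pi ^ 2 / 6 * ∑' k, ‖x k‖) :=
  hasSum_zeta_two.mul hx.hasSum <| hasSum_zeta_two.summable.mul_of_nonneg hx
    (fun _ => by positivity) fun _ => norm_nonneg _

lemma summable_norm_oddWeight (hx₀ : x 0 = 0) (hx₁ : x 1 = 0) (hx : Summable fun k => ‖x k‖) :
    Summable fun p => ‖oddWeight x p‖ :=
  (hasSum_inv_sq_mul_norm hx).summable.of_nonneg_of_le (fun _ => norm_nonneg _)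
    (norm_oddWeight_le hx₀ hx₁)

lemma tsum_norm_oddWeight_le (hx₀ : x 0 = 0) (hx₁ : x 1 = 0) (hx : Summable fun k => ‖x k‖) :
    ∑' p, ‖oddWeight x p‖ ≤ Real.pi ^ 2 / 6 * ∑' k, ‖x k‖ :=
  hasSum_le (norm_oddWeight_le hx₀ hx₁) (summable_norm_oddWeight hx₀ hx₁ hx).hasSum
    (hasSum_inv_sq_mul_norm hx)

end MultipleTValues

section MaximalHeight

/-- The weight of an entry of an index for which the index `K` has weight
`u ^ (K.sum - 2 * K.length) * w ^ K.length` if its height equals its depth, and `0` otherwise. -/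
noncomputable def maxHeightWeight (u w : ℝ) (k : ℕ) : ℝ := if 2 ≤ k then w * u ^ (k - 2) else 0

lemma maxHeightWeight_neg (u w : ℝ) : maxHeightWeight u (-w) = -maxHeightWeight u w := by
  ext k
  simp only [maxHeightWeight, Pi.neg_apply]
  split_ifs <;> simp

lemma hasSum_norm_maxHeightWeight {u : ℝ} (hu : |u| < 1) (w : ℝ) :
    HasSum (fun k => ‖maxHeightWeight u w k‖) (|w| * (1 - |u|)⁻¹) := by
  rw [← hasSum_nat_add_iff' 2]
  simpa [maxHeightWeight, Finset.sum_range_succ] using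
    (hasSum_geometric_of_lt_one (abs_nonneg u) hu).mul_left |w|

lemma prod_map_maxHeightWeight (u w : ℝ) {K : List ℕ} (hK : ∀ k ∈ K, 2 ≤ k) :
    (K.map (maxHeightWeight u w)).prod = u ^ (K.sum - 2 * K.length) * w ^ K.length := by
  induction K with
  | nil => simp
  | cons k K ih =>
    obtain ⟨hk, hK⟩ := List.forall_mem_cons.1 hK
    have hlen : K.length * 2 ≤ K.sum := List.card_nsmul_le_sum K 2 hK
    have hexp : (k :: K).sum - 2 * (k :: K).length = (k - 2) + (K.sum - 2 * K.length) := by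
      simp only [List.sum_cons, List.length_cons]
      omega
    rw [List.map_cons, List.prod_cons, ih hK, maxHeightWeight, if_pos hk, hexp, List.length_cons]
    ring

lemma prod_map_maxHeightWeight_eq_zero (u w : ℝ) {K : List ℕ} (hK : ¬ ∀ k ∈ K, 2 ≤ k) :
    (K.map (maxHeightWeight u w)).prod = 0 := by
  obtain ⟨k, hkK, hk⟩ := not_forall₂.1 hK
  exact List.prod_eq_zero (List.mem_map.2 ⟨k, hkK, if_neg hk⟩)

lemma admissible_and_countP_iff {K : List ℕ} {k n : ℕ} :
    (Admissible K ∧ K.sum = k ∧ K.length = n + 1 ∧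
        K.countP (fun i => decide (2 ≤ i)) = n + 1) ↔
      (∀ i ∈ K, 2 ≤ i) ∧ K.sum = k ∧ K.length = n + 1 := by
  have hcount : K.length = n + 1 →
      (K.countP (fun i => decide (2 ≤ i)) = n + 1 ↔ ∀ i ∈ K, 2 ≤ i) := by
    intro hlen
    simp [← hlen, List.countP_eq_length]
  have hadm : K.length = n + 1 → (∀ i ∈ K, 2 ≤ i) → Admissible K := by
    intro hlen hK
    obtain ⟨a, K, rfl⟩ := List.exists_cons_of_length_eq_add_one hlen
    exact ⟨fun i hi => one_le_two.trans (hK i hi), hK a List.mem_cons_self⟩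
  tauto

lemma mem_sum_length_fiber_iff {K : List ℕ} (hK : ∀ k ∈ K, 2 ≤ k) (hnil : K ≠ []) {s n : ℕ} :
    K ∈ (fun K : List ℕ => (K.sum - 2 * K.length, K.length - 1)) ⁻¹' {(s, n)} ↔
      K.sum = s + 2 * n + 2 ∧ K.length = n + 1 := by
  have hlen : K.length * 2 ≤ K.sum := List.card_nsmul_le_sum K 2 hK
  have hpos := List.length_pos_iff.2 hnil
  rw [mem_preimage, mem_singleton_iff, Prod.mk.injEq]
  omega

lemma indicator_sum_length_fiber (F : List ℕ → ℝ) (u w : ℝ) (s n : ℕ) (K : List ℕ) :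
    ((fun K : List ℕ => (K.sum - 2 * K.length, K.length - 1)) ⁻¹' {(s, n)}).indicator
        (fun K => if K = [] then 0 else F K * (K.map (maxHeightWeight u w)).prod) K =
      (if Admissible K ∧ K.sum = s + 2 * n + 2 ∧ K.length = n + 1 ∧
          K.countP (fun i => decide (2 ≤ i)) = n + 1 then F K else 0) * u ^ s * w ^ (n + 1) := by
  rcases eq_or_ne K [] with rfl | hnil
  · simp
  by_cases hK : ∀ k ∈ K, 2 ≤ k
  · rw [if_congr (admissible_and_countP_iff.trans (and_iff_right hK)) rfl rfl]
    split_ifs with h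
    · rw [indicator_of_mem ((mem_sum_length_fiber_iff hK hnil).2 h), if_neg hnil,
        prod_map_maxHeightWeight u w hK, h.1, h.2, show s + 2 * n + 2 - 2 * (n + 1) = s by omega,
        mul_assoc]
    · rw [indicator_of_notMem (mt (mem_sum_length_fiber_iff hK hnil).1 h), zero_mul, zero_mul]
  · rw [if_neg fun h => hK (admissible_and_countP_iff.1 h).1]
    simp [prod_map_maxHeightWeight_eq_zero u w hK]

lemma hasSum_maxHeight {F : List ℕ → ℝ} {u w : ℝ}
    (hF : Summable fun K => F K * (K.map (maxHeightWeight u w)).prod) :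
    HasSum (fun p : ℕ × ℕ =>
      (∑' K : List ℕ,
        if Admissible K ∧ K.sum = p.1 + 2 * p.2 + 2 ∧ K.length = p.2 + 1 ∧
            K.countP (fun i => decide (2 ≤ i)) = p.2 + 1 then F K else 0) *
        u ^ p.1 * w ^ (p.2 + 1))
      (∑' K, F K * (K.map (maxHeightWeight u w)).prod - F []) := by
  have hfib := (hasSum_ite_sub_hasSum hF.hasSum []).tsum_fiberwise
    fun K => (K.sum - 2 * K.length, K.length - 1)
  simp only [List.map_nil, List.prod_nil, mul_one] at hfib
  refine hfib.congr_fun fun p => ?_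
  rw [tsum_subtype _ fun K => if K = [] then 0 else F K * (K.map (maxHeightWeight u w)).prod,
    ← tsum_mul_right, ← tsum_mul_right]
  exact tsum_congr fun K => (indicator_sum_length_fiber F u w p.1 p.2 K).symm

variable {u w : ℝ}

lemma summable_norm_oddWeight_maxHeightWeight (hu : |u| < 1) :
    Summable fun p => ‖oddWeight (maxHeightWeight u w) p‖ :=
  summable_norm_oddWeight (by simp [maxHeightWeight]) (by simp [maxHeightWeight])
    (hasSum_norm_maxHeightWeight hu w).summable

lemma abs_lt_one_of_add_lt_one (huw : |u| + Real.pi ^ 2 / 6 * |w| < 1) : |u| < 1 :=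
  lt_of_le_of_lt (le_add_of_nonneg_right (by positivity)) huw

lemma tsum_norm_oddWeight_maxHeightWeight_lt_one
    (huw : |u| + Real.pi ^ 2 / 6 * |w| < 1) :
    ∑' p, ‖oddWeight (maxHeightWeight u w) p‖ < 1 := by
  have hu := abs_lt_one_of_add_lt_one huw
  have hx := hasSum_norm_maxHeightWeight hu w
  calc ∑' p, ‖oddWeight (maxHeightWeight u w) p‖
      ≤ Real.pi ^ 2 / 6 * ∑' k, ‖maxHeightWeight u w k‖ :=
        tsum_norm_oddWeight_le (by simp [maxHeightWeight]) (by simp [maxHeightWeight]) hx.summable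
    _ = Real.pi ^ 2 / 6 * |w| / (1 - |u|) := by rw [hx.tsum_eq]; ring
    _ < 1 := (div_lt_one (sub_pos.2 hu)).2 (by linarith)

lemma summable_multTRel_maxHeightWeight (R : ℕ → ℕ → Prop) [IsTrans ℕ R]
    (huw : |u| + Real.pi ^ 2 / 6 * |w| < 1) :
    Summable fun K => multTRel R K * (K.map (maxHeightWeight u w)).prod :=
  (hasSum_multTRel_mul_prod
    (summable_norm_oddWeight_maxHeightWeight (abs_lt_one_of_add_lt_one huw))
    (tsum_norm_oddWeight_maxHeightWeight_lt_one huw)).summable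

lemma hasSum_G0h (huw : |u| + Real.pi ^ 2 / 6 * |w| < 1) :
    HasSum (fun p : ℕ × ℕ =>
        G0h (p.1 + 2 * p.2 + 2) (p.2 + 1) (p.2 + 1) * u ^ p.1 * w ^ (p.2 + 1))
      (∑' K, multT K * (K.map (maxHeightWeight u w)).prod - 1) := by
  have h := hasSum_maxHeight (summable_multTRel_maxHeightWeight (· > ·) huw)
  rw [multTRel_nil, multTRel_gt] at h
  exact h

lemma hasSum_G0hStar (huw : |u| + Real.pi ^ 2 / 6 * |w| < 1) :
    HasSum (fun p : ℕ × ℕ =>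
        (-1 : ℝ) ^ (p.2 + 1) * G0hStar (p.1 + 2 * p.2 + 2) (p.2 + 1) (p.2 + 1)
          * u ^ p.1 * w ^ (p.2 + 1))
      (∑' K, multTStar K * (K.map (-maxHeightWeight u w)).prod - 1) := by
  have h := hasSum_maxHeight (summable_multTRel_maxHeightWeight (· ≥ ·) (w := -w) (by simpa))
  rw [multTRel_nil, multTRel_ge, maxHeightWeight_neg] at h
  refine h.congr_fun fun p => ?_
  change _ = G0hStar (p.1 + 2 * p.2 + 2) (p.2 + 1) (p.2 + 1) * u ^ p.1 * (-w) ^ (p.2 + 1)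
  rw [neg_pow w]
  ring

end MaximalHeight

theorem maximal_height_product_eq_one_general {u w : ℝ}
    (huw : |u| + Real.pi ^ 2 / 6 * |w| < 1) :
    Summable (fun p : ℕ × ℕ =>
        G0h (p.1 + 2 * p.2 + 2) (p.2 + 1) (p.2 + 1) * u ^ p.1 * w ^ (p.2 + 1)) ∧
      Summable (fun p : ℕ × ℕ =>
        (-1 : ℝ) ^ (p.2 + 1) * G0hStar (p.1 + 2 * p.2 + 2) (p.2 + 1) (p.2 + 1)
          * u ^ p.1 * w ^ (p.2 + 1)) ∧
      (1 + (∑' p : ℕ × ℕ,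
            G0h (p.1 + 2 * p.2 + 2) (p.2 + 1) (p.2 + 1) * u ^ p.1 * w ^ (p.2 + 1))) *
        (1 + ∑' p : ℕ × ℕ,
          (-1 : ℝ) ^ (p.2 + 1) * G0hStar (p.1 + 2 * p.2 + 2) (p.2 + 1) (p.2 + 1)
            * u ^ p.1 * w ^ (p.2 + 1)) = 1 := by
  have hG := hasSum_G0h huw
  have hGStar := hasSum_G0hStar huw
  refine ⟨hG.summable, hGStar.summable, ?_⟩
  rw [hG.tsum_eq, hGStar.tsum_eq, add_sub_cancel, add_sub_cancel]
  exact tsum_multT_mul_tsum_multTStar_neg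
    (summable_norm_oddWeight_maxHeightWeight (abs_lt_one_of_add_lt_one huw))
    (tsum_norm_oddWeight_maxHeightWeight_lt_one huw)

/-- The generating functions of maximal-height sums of multiple `t`-values and of
multiple `t`-star values (with alternating signs) are multiplicative inverses. -/
theorem maximal_height_product_eq_one :
    ∃ δ > (0 : ℝ), ∀ u w : ℝ, |u| < δ → |w| < δ →
      Summable (fun p : ℕ × ℕ =>
        G0h (p.1 + 2 * p.2 + 2) (p.2 + 1) (p.2 + 1) * u ^ p.1 * w ^ (p.2 + 1)) ∧
      Summable (fun p : ℕ × ℕ =>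
        (-1 : ℝ) ^ (p.2 + 1) * G0hStar (p.1 + 2 * p.2 + 2) (p.2 + 1) (p.2 + 1)
          * u ^ p.1 * w ^ (p.2 + 1)) ∧
      (1 + (∑' p : ℕ × ℕ,
            G0h (p.1 + 2 * p.2 + 2) (p.2 + 1) (p.2 + 1) * u ^ p.1 * w ^ (p.2 + 1))) *
        (1 + ∑' p : ℕ × ℕ,
          (-1 : ℝ) ^ (p.2 + 1) * G0hStar (p.1 + 2 * p.2 + 2) (p.2 + 1) (p.2 + 1)
            * u ^ p.1 * w ^ (p.2 + 1)) = 1 := by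
  refine ⟨1 / 3, by norm_num, fun u w hu hw => maximal_height_product_eq_one_general ?_⟩
  have hpi : Real.pi ^ 2 / 6 < 2 := by nlinarith [Real.pi_pos, Real.pi_lt_d2]
  nlinarith [abs_nonneg w]
end

section
/- For all real w with |w| < 1, 1 + ∑_{n ≥ 1} t^*({2}^n) w^n = exp( ∑_{n ≥ 1} (1/n) t(2n) w^n ), both series converging absolutely; here t^*({2}^n) is the multiple t-star value of the index consisting of the entry 2 repeated n times. -/
open scoped BigOperators

/-!
For a sequence `z` with `∑ |zₖ| < ∞` and `|zₖ| < 1`, let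
`hₙ(z) = ∑_{m₁ ≥ ⋯ ≥ mₙ} z_{m₁} ⋯ z_{mₙ}`. Splitting off the largest index gives
`hₙ₊₁(z₀, …, z_M) = hₙ₊₁(z₀, …, z_{M-1}) + z_M hₙ(z₀, …, z_M)`, so that
`∑ₙ hₙ(z₀, …, z_M) = ∏_{k ≤ M} (1 - zₖ)⁻¹`. As `M → ∞` the right side tends to
`exp (-∑ₖ log (1 - zₖ)) = exp (∑_{n ≥ 1} (1/n) ∑ₖ zₖⁿ)`, and the left side to `∑ₙ hₙ(z)` by
dominated convergence, the majorant `∑ₙ hₙ(|z|)` being finite because its truncations are bounded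
by a convergent product. The theorem is the case `zₖ = w / (2k+1)²`, where `hₙ(z) = t*({2}ⁿ) wⁿ`.
-/

open Filter Finset Topology

section PowerSums

variable {ι : Type*} {z : ι → ℝ}

lemma summable_pow_succ_div_prod (hz : Summable fun k => |z k|) (hlt : ∀ k, |z k| < 1) :
    Summable fun p : ι × ℕ => z p.1 ^ (p.2 + 1) / ((p.2 : ℝ) + 1) := by
  have log_series (k : ι) :
      HasSum (fun n : ℕ => |z k| ^ (n + 1) / ((n : ℝ) + 1)) (-Real.log (1 - |z k|)) :=
    Real.hasSum_pow_div_log_of_abs_lt_one (by simpa using hlt k)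
  have log_summable : Summable fun k => -Real.log (1 - |z k|) := by
    simpa only [sub_eq_add_neg] using (Real.summable_log_one_add_of_summable hz.neg).neg
  have abs_summable : Summable fun p : ι × ℕ => |z p.1| ^ (p.2 + 1) / ((p.2 : ℝ) + 1) := by
    rw [summable_prod_of_nonneg fun p => by positivity]
    exact ⟨fun k => (log_series k).summable,
      log_summable.congr fun k => (log_series k).tsum_eq.symm⟩
  refine .of_norm (abs_summable.congr fun p => ?_)
  rw [norm_div, norm_pow, Real.norm_eq_abs, Real.norm_of_nonneg (by positivity)]

lemma summable_tsum_pow_succ_div (hz : Summable fun k => |z k|) (hlt : ∀ k, |z k| < 1) :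
    Summable fun n : ℕ => (∑' k, z k ^ (n + 1)) / ((n : ℝ) + 1) := by
  simpa only [Prod.fst_swap, Prod.snd_swap, tsum_div_const] using
    (summable_pow_succ_div_prod hz hlt).prod_symm.prod

lemma hasProd_one_sub_inv_exp (hz : Summable fun k => |z k|) (hlt : ∀ k, |z k| < 1) :
    HasProd (fun k => (1 - z k)⁻¹)
      (Real.exp (∑' n : ℕ, (∑' k, z k ^ (n + 1)) / ((n : ℝ) + 1))) := by
  have hsum := summable_pow_succ_div_prod hz hlt
  have log_series (k : ι) :
      HasSum (fun n : ℕ => z k ^ (n + 1) / ((n : ℝ) + 1)) (-Real.log (1 - z k)) :=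
    Real.hasSum_pow_div_log_of_abs_lt_one (hlt k)
  have swap : ∑' p : ι × ℕ, z p.1 ^ (p.2 + 1) / ((p.2 : ℝ) + 1) =
      ∑' n : ℕ, (∑' k, z k ^ (n + 1)) / ((n : ℝ) + 1) := by
    simp only [← tsum_div_const]
    exact hsum.tsum_prod.trans
      (Summable.tsum_comm (f := fun k (n : ℕ) => z k ^ (n + 1) / ((n : ℝ) + 1)) hsum).symm
  rw [← swap]
  refine (hsum.hasSum.prod_fiberwise log_series).rexp.congr fun s => prod_congr rfl fun k _ => ?_
  have hpos : 0 < 1 - z k := sub_pos.2 (abs_lt.1 (hlt k)).2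
  rw [Function.comp_apply, Real.exp_neg, Real.exp_log hpos]

end PowerSums

section CompleteHomogeneous

variable {𝕜 : Type*} [NormedField 𝕜] {z : ℕ → 𝕜}

/-- The complete homogeneous symmetric function `hₙ(z₀, z₁, …)` of degree `n` in infinitely many
variables. A monomial is encoded by the antitone listing of its indices; the function of the
finitely many variables `z₀, …, z_{M-1}` is obtained by applying this to `(Set.Iio M).indicator z`.
-/
noncomputable def hsymmSum (z : ℕ → 𝕜) (n : ℕ) : 𝕜 :=
  ∑' m : {m : Fin n → ℕ // Antitone m}, ∏ i, z (m.1 i)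

lemma hsymmSum_zero_right (z : ℕ → 𝕜) : hsymmSum z 0 = 1 := by
  have : Unique {m : Fin 0 → ℕ // Antitone m} :=
    ⟨⟨⟨0, antitone_const⟩⟩, fun _ => Subsingleton.elim _ _⟩
  simp [hsymmSum]

lemma hsymmSum_zero_left_succ (n : ℕ) : hsymmSum (0 : ℕ → 𝕜) (n + 1) = 0 := by
  simp [hsymmSum]

lemma hsymmSum_const_mul (c : 𝕜) (z : ℕ → 𝕜) (n : ℕ) :
    hsymmSum (fun k => c * z k) n = c ^ n * hsymmSum z n := by
  simp only [hsymmSum, prod_mul_distrib, prod_const, card_univ, Fintype.card_fin, tsum_mul_left]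

lemma hsymmSum_nonneg {y : ℕ → ℝ} (hy : ∀ k, 0 ≤ y k) (n : ℕ) : 0 ≤ hsymmSum y n :=
  tsum_nonneg fun _ => prod_nonneg fun _ _ => hy _

lemma summable_norm_prod_apply {ι : Type*} {f : ι → 𝕜} (hf : Summable fun k => ‖f k‖) (n : ℕ) :
    Summable fun m : Fin n → ι => ‖∏ i, f (m i)‖ := by
  induction n with
  | zero => exact .of_finite
  | succ n ih =>
    rw [← (Fin.consEquiv fun _ : Fin (n + 1) => ι).summable_iff]
    refine (hf.mul_norm (by simpa only [norm_norm] using ih)).congr fun p => ?_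
    simp [Fin.consEquiv, Fin.prod_univ_succ]

lemma norm_hsymmSum_le {y : ℕ → ℝ} (hy : Summable y) (hzy : ∀ k, ‖z k‖ ≤ y k) (n : ℕ) :
    ‖hsymmSum z n‖ ≤ hsymmSum y n := by
  have hsum : Summable fun m : {m : Fin n → ℕ // Antitone m} => ∏ i, y (m.1 i) :=
    (summable_norm_prod_apply hy.norm n).of_norm.subtype _
  refine tsum_of_norm_bounded hsum.hasSum fun m => ?_
  rw [norm_prod]
  exact prod_le_prod (fun _ _ => norm_nonneg _) fun _ _ => hzy _

lemma antitone_finCons_iff {α : Type*} [Preorder α] {n : ℕ} {k : α} {m : Fin n → α} :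
    Antitone (Fin.cons k m : Fin (n + 1) → α) ↔ (∀ i, m i ≤ k) ∧ Antitone m := by
  simp [antitone_iff_forall_lt, Fin.forall_fin_succ]

lemma indicator_antitone_prod_cons (z : ℕ → 𝕜) {n : ℕ} (k : ℕ) (m : Fin n → ℕ) :
    {m : Fin (n + 1) → ℕ | Antitone m}.indicator (fun m => ∏ i, z (m i)) (Fin.cons k m) =
      z k * {m : Fin n → ℕ | Antitone m}.indicator
        (fun m => ∏ i, (Set.Iio (k + 1)).indicator z (m i)) m := by
  by_cases hm : Antitone m
  · by_cases hk : ∀ i, m i ≤ k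
    · simp [antitone_finCons_iff, hm, hk, Fin.prod_univ_succ, Set.indicator_of_mem]
    · obtain ⟨i, hi⟩ := not_forall.1 hk
      have h_prod : ∏ i, (Set.Iio (k + 1)).indicator z (m i) = 0 :=
        prod_eq_zero (mem_univ i) (Set.indicator_of_notMem (by simpa using hi) z)
      simp [antitone_finCons_iff, hm, hk, h_prod]
  · simp [antitone_finCons_iff, hm]

lemma tsum_odd_antitone_eq_hsymmSum (f : ℕ → 𝕜) (n : ℕ) :
    (∑' m : Fin n → ℕ, if (∀ i, Odd (m i)) ∧ (∀ i j : Fin n, i < j → m j ≤ m i) then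
      ∏ i, f (m i) else 0) = hsymmSum (fun k => f (2 * k + 1)) n := by
  let g (m : {m : Fin n → ℕ // Antitone m}) (i : Fin n) : ℕ := 2 * m.1 i + 1
  have hg : Function.Injective g := fun a b hab => by
    ext i
    simpa [g] using congrFun hab i
  rw [← hg.tsum_eq]
  · refine tsum_congr fun m => if_pos ⟨fun i => odd_two_mul_add_one _, fun i j hij => ?_⟩
    exact Nat.succ_le_succ (Nat.mul_le_mul_left 2 (m.2 hij.le))
  · intro m hm
    obtain ⟨h_odd, h_anti⟩ : (∀ i, Odd (m i)) ∧ ∀ i j : Fin n, i < j → m j ≤ m i := by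
      by_contra h
      exact hm (if_neg h)
    choose l hl using h_odd
    refine ⟨⟨l, antitone_iff_forall_lt.2 fun i j hij => ?_⟩, funext fun i => (hl i).symm⟩
    have := h_anti i j hij
    simp only [hl] at this
    omega

variable [CompleteSpace 𝕜]

lemma hsymmSum_succ (hz : Summable fun k => ‖z k‖) (n : ℕ) :
    hsymmSum z (n + 1) = ∑' k, z k * hsymmSum ((Set.Iio (k + 1)).indicator z) n := by
  let F : (Fin (n + 1) → ℕ) → 𝕜 := {m | Antitone m}.indicator fun m => ∏ i, z (m i)
  let e : ℕ × (Fin n → ℕ) ≃ (Fin (n + 1) → ℕ) := Fin.consEquiv fun _ => ℕ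
  have hF : Summable F := (summable_norm_prod_apply hz (n + 1)).of_norm.indicator _
  calc hsymmSum z (n + 1) = ∑' m, F m := tsum_subtype {m | Antitone m} fun m => ∏ i, z (m i)
    _ = ∑' p, F (e p) := (e.tsum_eq F).symm
    _ = ∑' k, ∑' m : Fin n → ℕ, F (Fin.cons k m) := (e.summable_iff.2 hF).tsum_prod
    _ = ∑' k, z k * hsymmSum ((Set.Iio (k + 1)).indicator z) n := by
        refine tsum_congr fun k => ?_
        simp only [F, indicator_antitone_prod_cons, tsum_mul_left]
        exact congrArg (z k * ·) (tsum_subtype {m : Fin n → ℕ | Antitone m} _).symm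

lemma hsymmSum_indicator_Iio_succ (z : ℕ → 𝕜) (M n : ℕ) :
    hsymmSum ((Set.Iio M).indicator z) (n + 1) =
      ∑ k ∈ range M, z k * hsymmSum ((Set.Iio (k + 1)).indicator z) n := by
  have hfin : Summable fun k => ‖(Set.Iio M).indicator z k‖ :=
    summable_of_ne_finset_zero (s := range M) fun k hk => by simp_all
  rw [hsymmSum_succ hfin, tsum_eq_sum (s := range M) fun k hk => by simp_all]
  refine sum_congr rfl fun k hk => ?_
  have hkM : k < M := mem_range.1 hk
  rw [Set.indicator_of_mem (Set.mem_Iio.2 hkM), Set.indicator_indicator,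
    Set.inter_eq_left.2 (Set.Iio_subset_Iio hkM)]

lemma hsymmSum_indicator_Iio_succ_succ (z : ℕ → 𝕜) (M n : ℕ) :
    hsymmSum ((Set.Iio (M + 1)).indicator z) (n + 1) =
      hsymmSum ((Set.Iio M).indicator z) (n + 1) +
        z M * hsymmSum ((Set.Iio (M + 1)).indicator z) n := by
  rw [hsymmSum_indicator_Iio_succ, sum_range_succ, ← hsymmSum_indicator_Iio_succ]

lemma summable_norm_and_tsum_of_linear_recurrence {u v : ℕ → 𝕜} {c : 𝕜} (hc : ‖c‖ < 1)
    (hv : Summable fun n => ‖v n‖) (h_zero : u 0 = v 0)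
    (h_succ : ∀ n, u (n + 1) = v (n + 1) + c * u n) :
    (Summable fun n => ‖u n‖) ∧ ∑' n, u n = (1 - c)⁻¹ * ∑' n, v n := by
  have hu (n : ℕ) : u n = ∑ p ∈ antidiagonal n, c ^ p.1 * v p.2 := by
    induction n with
    | zero => simp [h_zero]
    | succ n ih =>
      rw [h_succ, ih, Nat.sum_antidiagonal_succ, mul_sum]
      simp [pow_succ', mul_assoc]
  have hgeom : Summable fun n => ‖c ^ n‖ := summable_norm_geometric_of_norm_lt_one hc
  simp only [hu]
  exact ⟨summable_norm_sum_mul_antidiagonal_of_summable_norm hgeom hv,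
    by rw [← tsum_mul_tsum_eq_tsum_sum_antidiagonal_of_summable_norm hgeom hv,
      tsum_geometric_of_norm_lt_one hc]⟩

lemma summable_norm_and_tsum_hsymmSum_indicator_Iio (hlt : ∀ k, ‖z k‖ < 1) (M : ℕ) :
    (Summable fun n => ‖hsymmSum ((Set.Iio M).indicator z) n‖) ∧
      ∑' n, hsymmSum ((Set.Iio M).indicator z) n = ∏ k ∈ range M, (1 - z k)⁻¹ := by
  induction M with
  | zero =>
    have hz : (Set.Iio 0).indicator z = 0 := by ext; simp
    have h_ne (n : ℕ) (hn : n ∉ ({0} : Finset ℕ)) : hsymmSum (0 : ℕ → 𝕜) n = 0 := by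
      obtain ⟨n, rfl⟩ := Nat.exists_eq_succ_of_ne_zero (by simpa using hn)
      exact hsymmSum_zero_left_succ n
    rw [hz]
    exact ⟨summable_of_ne_finset_zero (s := {0}) fun n hn => by rw [h_ne n hn, norm_zero],
      by rw [tsum_eq_sum h_ne]; simp [hsymmSum_zero_right]⟩
  | succ M ih =>
    rw [prod_range_succ, mul_comm, ← ih.2]
    exact summable_norm_and_tsum_of_linear_recurrence (hlt M) ih.1
      (by simp only [hsymmSum_zero_right])
      (hsymmSum_indicator_Iio_succ_succ z M)

lemma tendsto_hsymmSum_indicator_Iio (hz : Summable fun k => ‖z k‖) (n : ℕ) :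
    Tendsto (fun M => hsymmSum ((Set.Iio M).indicator z) n) atTop (𝓝 (hsymmSum z n)) := by
  refine tendsto_tsum_of_dominated_convergence ((summable_norm_prod_apply hz n).subtype _)
    (fun m => tendsto_finsetProd _ fun i _ => ?_) (.of_forall fun M m => ?_)
  · refine tendsto_const_nhds.congr' ?_
    filter_upwards [eventually_gt_atTop (m.1 i)] with M hM
    exact (Set.indicator_of_mem (Set.mem_Iio.2 hM) z).symm
  · simp only [norm_prod, Function.comp_apply]
    exact prod_le_prod (fun _ _ => norm_nonneg _) fun _ _ => norm_indicator_le_norm_self _ _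

lemma summable_hsymmSum_of_nonneg {y : ℕ → ℝ} (hy : Summable y) (h_nonneg : ∀ k, 0 ≤ y k)
    (hlt : ∀ k, y k < 1) : Summable (hsymmSum y) := by
  have h_abs (k : ℕ) : |y k| = y k := abs_of_nonneg (h_nonneg k)
  obtain ⟨B, hB⟩ := (hasProd_one_sub_inv_exp (z := y) (by simpa only [h_abs])
    (by simpa only [h_abs])).tendsto_prod_nat.bddAbove_range
  have hpartial (N M : ℕ) : ∑ n ∈ range N, hsymmSum ((Set.Iio M).indicator y) n ≤ B := by
    obtain ⟨hsum, htsum⟩ := summable_norm_and_tsum_hsymmSum_indicator_Iio (z := y)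
      (by simpa only [Real.norm_eq_abs, h_abs]) M
    calc ∑ n ∈ range N, hsymmSum ((Set.Iio M).indicator y) n
        ≤ ∑' n, hsymmSum ((Set.Iio M).indicator y) n := hsum.of_norm.sum_le_tsum _ fun n _ =>
          hsymmSum_nonneg (Set.indicator_nonneg fun k _ => h_nonneg k) n
      _ = ∏ k ∈ range M, (1 - y k)⁻¹ := htsum
      _ ≤ B := hB ⟨M, rfl⟩
  exact summable_of_sum_range_le (hsymmSum_nonneg h_nonneg) fun N => le_of_tendsto'
    (tendsto_finsetSum _ fun n _ => tendsto_hsymmSum_indicator_Iio hy.norm n) (hpartial N)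

lemma summable_hsymmSum (hz : Summable fun k => ‖z k‖) (hlt : ∀ k, ‖z k‖ < 1) :
    Summable (hsymmSum z) :=
  .of_norm_bounded (summable_hsymmSum_of_nonneg hz (fun _ => norm_nonneg _) hlt)
    (norm_hsymmSum_le hz fun _ => le_rfl)

lemma tendsto_prod_one_sub_inv_tsum_hsymmSum (hz : Summable fun k => ‖z k‖)
    (hlt : ∀ k, ‖z k‖ < 1) :
    Tendsto (fun M => ∏ k ∈ range M, (1 - z k)⁻¹) atTop (𝓝 (∑' n, hsymmSum z n)) := by
  simp only [← (summable_norm_and_tsum_hsymmSum_indicator_Iio hlt _).2]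
  exact tendsto_tsum_of_dominated_convergence
    (summable_hsymmSum_of_nonneg hz (fun _ => norm_nonneg _) hlt)
    (tendsto_hsymmSum_indicator_Iio hz)
    (.of_forall fun M => norm_hsymmSum_le hz fun k => norm_indicator_le_norm_self z k)

end CompleteHomogeneous

lemma tsum_hsymmSum_eq_exp {z : ℕ → ℝ} (hz : Summable fun k => |z k|) (hlt : ∀ k, |z k| < 1) :
    ∑' n, hsymmSum z n = Real.exp (∑' n : ℕ, (∑' k, z k ^ (n + 1)) / ((n : ℝ) + 1)) :=
  tendsto_nhds_unique (tendsto_prod_one_sub_inv_tsum_hsymmSum hz hlt)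
    (hasProd_one_sub_inv_exp hz hlt).tendsto_prod_nat

lemma summable_inv_odd_pow {c : ℕ} (hc : 1 < c) :
    Summable fun k : ℕ => ((2 * (k : ℝ) + 1) ^ c)⁻¹ := by
  have hinj : Function.Injective fun k : ℕ => 2 * k + 1 := fun a b h => by simpa using h
  simpa [Function.comp_def] using (Real.summable_nat_pow_inv.2 hc).comp_injective hinj

lemma multTStar_replicate (n c : ℕ) :
    multTStar (List.replicate n c) = hsymmSum (fun k => ((2 * (k : ℝ) + 1) ^ c)⁻¹) n := by
  simp only [multTStar, List.get_eq_getElem, List.getElem_replicate]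
  rw [tsum_odd_antitone_eq_hsymmSum fun m => ((m : ℝ) ^ c)⁻¹, List.length_replicate]
  push_cast
  rfl

lemma tsum_pow_eq_tval (c n : ℕ) (w : ℝ) :
    ∑' k : ℕ, (w * ((2 * (k : ℝ) + 1) ^ c)⁻¹) ^ n = tval (c * n) * w ^ n := by
  rw [tval, ← tsum_mul_right]
  refine tsum_congr fun k => ?_
  rw [mul_pow, inv_pow, ← pow_mul, one_div, mul_comm]

theorem t_star_two_repeated_generating_function_general {c : ℕ} (hc : 1 < c) (w : ℝ)
    (hw : |w| < 1) :
    Summable (fun n : ℕ => multTStar (List.replicate (n + 1) c) * w ^ (n + 1)) ∧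
    Summable (fun n : ℕ => 1 / (n + 1 : ℝ) * tval (c * (n + 1)) * w ^ (n + 1)) ∧
    1 + ∑' n : ℕ, multTStar (List.replicate (n + 1) c) * w ^ (n + 1)
      = Real.exp (∑' n : ℕ,
          1 / (n + 1 : ℝ) * tval (c * (n + 1)) * w ^ (n + 1)) := by
  let z : ℕ → ℝ := fun k => w * ((2 * (k : ℝ) + 1) ^ c)⁻¹
  have hz : Summable fun k => |z k| := ((summable_inv_odd_pow hc).mul_left w).abs
  have hlt (k : ℕ) : |z k| < 1 := by
    have h_le_one : |((2 * (k : ℝ) + 1) ^ c)⁻¹| ≤ 1 := by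
      rw [abs_of_pos (by positivity)]
      exact inv_le_one_of_one_le₀ (one_le_pow₀ (by simp))
    rw [abs_mul]
    exact (mul_le_of_le_one_right (abs_nonneg w) h_le_one).trans_lt hw
  have h_star (n : ℕ) : multTStar (List.replicate n c) * w ^ n = hsymmSum z n := by
    rw [multTStar_replicate, hsymmSum_const_mul, mul_comm]
  have h_tval (n : ℕ) : 1 / (n + 1 : ℝ) * tval (c * (n + 1)) * w ^ (n + 1) =
      (∑' k, z k ^ (n + 1)) / ((n : ℝ) + 1) := by
    rw [tsum_pow_eq_tval]
    ring
  have h_summable : Summable (hsymmSum z) := summable_hsymmSum hz hlt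
  simp only [h_star, h_tval]
  refine ⟨(summable_nat_add_iff 1).2 h_summable, summable_tsum_pow_succ_div hz hlt, ?_⟩
  rw [← tsum_hsymmSum_eq_exp hz hlt, h_summable.tsum_eq_zero_add, hsymmSum_zero_right]

/-- `1 + ∑_{n ≥ 1} t*({2}ⁿ) wⁿ = exp(∑_{n ≥ 1} (1/n) t(2n) wⁿ)` for `|w| < 1`. -/
theorem t_star_two_repeated_generating_function (w : ℝ) (hw : |w| < 1) :
    Summable (fun n : ℕ => multTStar (List.replicate (n + 1) 2) * w ^ (n + 1)) ∧
    Summable (fun n : ℕ => 1 / (n + 1 : ℝ) * tval (2 * (n + 1)) * w ^ (n + 1)) ∧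
    1 + ∑' n : ℕ, multTStar (List.replicate (n + 1) 2) * w ^ (n + 1)
      = Real.exp (∑' n : ℕ,
          1 / (n + 1 : ℝ) * tval (2 * (n + 1)) * w ^ (n + 1)) :=
  t_star_two_repeated_generating_function_general one_lt_two w hw
end

section
/- There exists δ > 0 such that for all real u with |u| < δ: ∑_{k ≥ 2} (∑_{n=1}^{k−1} 2^{n−1} G_0(k,n)) u^{k−2} = ∑_{k ≥ 2} (∑_{n=1}^{k−1} (−1)^{k−n−1} 2^{n−1} G_0^*(k,n)) u^{k−2} = 2^{2u} · t(2) · exp( ∑_{n ≥ 2} (4(2^{n−1}−1)/(n(2^n−1))) t(n) u^n ), all series converging absolutely. -/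
open scoped BigOperators

/-!
Put `xᵢ = 1 / (2i + 1)`. Collecting the indices by their first entry, the series with
coefficients `∑ₙ 2ⁿ⁻¹ G₀(k, n)` is the sum over `i` of
`xᵢ² / (1 - xᵢ u) * ∏_{l < i} (1 + 2 xₗ u / (1 - xₗ u))`: each odd number below `2i + 1` either does
not occur, or occurs with weight `2` and any positive exponent. For the star values an odd number
may be repeated, and the signs replace the weight `2` and `xₗ` by `-2` and `-xₗ`; the corresponding
factor is `1 / (1 - 2 xₗ u / (1 + xₗ u)) = (1 + xₗ u) / (1 - xₗ u)`, which is also the factor above.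
Hence both series agree.

Their common value `Φ(-u)` is the well-poised sum `∑ⱼ Rⱼ / ((2j + 1) (2j + 1 - u))` with
`Rⱼ = ∏_{i < j} (2i + 1 + u) / (2i + 1 - u)`. It satisfies `(v + 2)² Φ(v + 2) = (v + 1)² Φ(v)`, and
`v Φ(v)` has a positive limit as `v → ∞`. Iterating the recurrence from `-u` and from `0` and
comparing the asymptotics gives `Φ(0) / Φ(-u) = ∏ᵢ ((1 - u / (2i + 1)) / (1 - u / (2i + 2)))²`. Here
`Φ(0) = t(2)`, and the logarithm of the product is expanded in powers of `u`; the linear term is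
the alternating harmonic series, whence the factor `2 ^ (2u)`.
-/

namespace MultipleTValue

open Finset

section Compositions

/-- The finset of the lists underlying the compositions of `r`, that is, of the lists of positive
integers with sum `r`. -/
def compositions (r : ℕ) : Finset (List ℕ) :=
  univ.map ⟨Composition.blocks (n := r), fun _ _ h => Composition.ext h⟩

lemma mem_compositions {r : ℕ} {K : List ℕ} :
    K ∈ compositions r ↔ (∀ i ∈ K, 0 < i) ∧ K.sum = r := by
  simp only [compositions, mem_map, mem_univ, true_and]
  exact ⟨fun ⟨c, hc⟩ => hc ▸ ⟨fun _ => c.blocks_pos, c.blocks_sum⟩,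
    fun ⟨hpos, hsum⟩ => ⟨⟨K, @hpos, hsum⟩, rfl⟩⟩

lemma cons_mem_compositions {r k : ℕ} {K : List ℕ} :
    k :: K ∈ compositions r ↔ 0 < k ∧ K ∈ compositions K.sum ∧ k + K.sum = r := by
  simp [mem_compositions, and_assoc]

lemma compositions_zero : compositions 0 = {[]} := by
  ext K
  cases K with
  | nil => simp [mem_compositions]
  | cons k K => simpa [cons_mem_compositions] using fun hk _ hk' => absurd hk' hk.ne'

lemma length_le_of_mem_compositions {r : ℕ} {K : List ℕ} (hK : K ∈ compositions r) :
    K.length ≤ r := by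
  obtain ⟨hpos, rfl⟩ := mem_compositions.1 hK
  exact List.length_le_sum_of_one_le K hpos

lemma sum_compositions_succ {M : Type*} [AddCommMonoid M] (r : ℕ) (φ : List ℕ → M) :
    ∑ K ∈ compositions (r + 1), φ K =
      ∑ kl ∈ antidiagonal r, ∑ K ∈ compositions kl.2, φ ((kl.1 + 1) :: K) := by
  rw [sum_sigma']
  refine sum_nbij' (fun K => ⟨(K.headI - 1, K.tail.sum), K.tail⟩)
    (fun p => (p.1.1 + 1) :: p.2) ?_ ?_ ?_ ?_ ?_
  · rintro (_ | ⟨k, K⟩) hK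
    · simp [mem_compositions] at hK
    · obtain ⟨hk, hK, hsum⟩ := cons_mem_compositions.1 hK
      simpa using ⟨by omega, hK⟩
  · rintro ⟨⟨k, l⟩, K⟩ hp
    obtain ⟨hkl, hK⟩ : k + l = r ∧ K ∈ compositions l := by simpa using hp
    obtain rfl := (mem_compositions.1 hK).2
    exact cons_mem_compositions.2 ⟨k.succ_pos, hK, by grind⟩
  · rintro (_ | ⟨k, K⟩) hK
    · simp [mem_compositions] at hK
    · simpa using Nat.sub_add_cancel (cons_mem_compositions.1 hK).1
  · rintro ⟨⟨k, l⟩, K⟩ hp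
    obtain ⟨-, hK⟩ := by simpa using hp
    obtain rfl := (mem_compositions.1 hK).2
    rfl
  · rintro (_ | ⟨k, K⟩) hK
    · simp [mem_compositions] at hK
    · simp [Nat.sub_add_cancel (cons_mem_compositions.1 hK).1]

lemma sum_filter_headI_compositions {M : Type*} [AddCommMonoid M] (j : ℕ) (φ : List ℕ → M) :
    ∑ K ∈ compositions (j + 2) with 2 ≤ K.headI, φ K =
      ∑ kl ∈ antidiagonal j, ∑ K ∈ compositions kl.2, φ ((kl.1 + 2) :: K) := by
  rw [sum_filter, sum_compositions_succ, Nat.sum_antidiagonal_succ]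
  simp

lemma admissible_iff {K : List ℕ} {r : ℕ} :
    Admissible K ∧ K.sum = r ↔ K ∈ compositions r ∧ 2 ≤ K.headI := by
  simp only [Admissible, mem_compositions, Nat.succ_le_iff]
  tauto

lemma sum_range_mul_tsum_admissible (j : ℕ) (g : ℕ → ℝ) (f : List ℕ → ℝ) :
    ∑ n ∈ range (j + 1), g n *
        ∑' K : List ℕ, (if Admissible K ∧ K.sum = j + 2 ∧ K.length = n + 1 then f K else 0) =
      ∑ kl ∈ antidiagonal j, ∑ K ∈ compositions kl.2, g K.length * f ((kl.1 + 2) :: K) := by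
  have hfinite (n : ℕ) :
      ∑' K : List ℕ, (if Admissible K ∧ K.sum = j + 2 ∧ K.length = n + 1 then f K else 0) =
        ∑ K ∈ compositions (j + 2) with 2 ≤ K.headI, if K.length = n + 1 then f K else 0 := by
    rw [tsum_eq_sum (s := {K ∈ compositions (j + 2) | 2 ≤ K.headI})]
    · refine sum_congr rfl fun K hK => ?_
      rw [mem_filter, ← admissible_iff] at hK
      simp only [hK.1, hK.2, true_and]
    · intro K hK
      rw [mem_filter, ← admissible_iff] at hK
      exact if_neg fun h => hK ⟨h.1, h.2.1⟩
  simp_rw [hfinite, mul_sum]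
  rw [sum_comm, sum_filter_headI_compositions]
  refine sum_congr rfl fun kl hkl => sum_congr rfl fun K hK => ?_
  have hlen : K.length ∈ range (j + 1) :=
    mem_range.2 ((length_le_of_mem_compositions hK).trans_lt (Nat.antidiagonal.snd_lt hkl))
  simp [mul_ite, sum_ite_eq, hlen]

end Compositions

section NestedSums

variable {R : Type*}

/-- The sum of `x (i₁) ^ k₁ ⋯ x (iₙ) ^ kₙ` over all `i₁, …, iₙ` with `i₁ < M` and
`i_{a+1} < i_a + s`, for the index `(k₁, …, kₙ)`. For `s = 0` these are the strictly decreasing and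
for `s = 1` the weakly decreasing sequences. -/
def nestedSum [CommSemiring R] (s : ℕ) (x : ℕ → R) : List ℕ → ℕ → R
  | [], _ => 1
  | k :: K, M => ∑ i ∈ range M, x i ^ k * nestedSum s x K (i + s)

lemma nestedSum_neg [CommRing R] (s : ℕ) (x : ℕ → R) (K : List ℕ) (M : ℕ) :
    nestedSum s (-x) K M = (-1) ^ K.sum * nestedSum s x K M := by
  induction K generalizing M with
  | nil => simp [nestedSum]
  | cons k K ih =>
    simp only [nestedSum, List.sum_cons, ih, mul_sum, Pi.neg_apply, neg_pow (x _) k]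
    exact sum_congr rfl fun i _ => by ring

lemma nestedSum_nonneg {x : ℕ → ℝ} (hx : ∀ i, 0 ≤ x i) (s : ℕ) (K : List ℕ) (M : ℕ) :
    0 ≤ nestedSum s x K M := by
  induction K generalizing M with
  | nil => exact zero_le_one
  | cons k K ih => exact sum_nonneg fun i _ => mul_nonneg (pow_nonneg (hx i) k) (ih _)

lemma nestedSum_ofReal {x : ℕ → ℝ} (hx : ∀ i, 0 ≤ x i) (s : ℕ) (K : List ℕ) (M : ℕ) :
    nestedSum s (fun i => ENNReal.ofReal (x i)) K M = ENNReal.ofReal (nestedSum s x K M) := by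
  induction K generalizing M with
  | nil => simp [nestedSum]
  | cons k K ih =>
    simp only [nestedSum, ih]
    rw [ENNReal.ofReal_sum_of_nonneg fun i _ =>
      mul_nonneg (pow_nonneg (hx i) k) (nestedSum_nonneg hx s K _)]
    refine sum_congr rfl fun i _ => ?_
    rw [ENNReal.ofReal_mul (pow_nonneg (hx i) k), ENNReal.ofReal_pow (hx i)]

lemma nestedSum_le {x : ℕ → ℝ} (hx₀ : ∀ i, 0 ≤ x i) (hx₁ : ∀ i, x i ≤ 1) {s : ℕ} (hs : s ≤ 1)
    {K : List ℕ} (hK : ∀ k ∈ K, 0 < k) (M : ℕ) :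
    nestedSum s x K M ≤ (∑ i ∈ range M, x i) ^ K.length := by
  induction K generalizing M with
  | nil => simp [nestedSum]
  | cons k K ih =>
    obtain ⟨hk, hK⟩ := List.forall_mem_cons.1 hK
    rw [nestedSum, List.length_cons, pow_succ', sum_mul]
    refine sum_le_sum fun i hi => mul_le_mul (pow_le_of_le_one (hx₀ i) (hx₁ i) hk.ne')
      ((ih hK _).trans ?_) (nestedSum_nonneg hx₀ s K _) (hx₀ i)
    have hiM : i + s ≤ M := (Nat.add_le_add_left hs i).trans (mem_range.1 hi)
    gcongr with l _ _
    exacts [sum_nonneg fun i _ => hx₀ i, fun i _ _ => hx₀ i]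

end NestedSums

section GeneratingSeries

open PowerSeries

variable {R : Type*} [CommRing R]

/-- The geometric series `∑ (y X) ^ r`, the inverse of `1 - y X`. -/
noncomputable def geomSeries (y : R) : R⟦X⟧ := PowerSeries.mk (y ^ ·)

lemma one_sub_mul_geomSeries (y : R) : (1 - C y * X) * geomSeries y = 1 := by
  ext (_ | r)
  · simp [geomSeries]
  · simp [geomSeries, sub_mul, mul_assoc, coeff_succ_X_mul, pow_succ', coeff_one]

/-- The generating series, by weight, of the nested sums below `M` over all indices `K`, with the
factor `c ^ K.length`. -/
noncomputable def compSeries (s : ℕ) (c : R) (x : ℕ → R) (M : ℕ) : R⟦X⟧ :=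
  PowerSeries.mk fun r => ∑ K ∈ compositions r, c ^ K.length * nestedSum s x K M

lemma compSeries_zero (s : ℕ) (c : R) (x : ℕ → R) : compSeries s c x 0 = 1 := by
  ext (_ | r)
  · simp [compSeries, compositions_zero, nestedSum]
  · simp [compSeries, sum_compositions_succ, nestedSum, coeff_one]

lemma compSeries_succ (s : ℕ) (c : R) (x : ℕ → R) (M : ℕ) :
    compSeries s c x (M + 1) =
      compSeries s c x M + C (c * x M) * X * geomSeries (x M) * compSeries s c x (M + s) := by
  ext (_ | r)
  · simp [compSeries, compositions_zero, nestedSum, mul_assoc]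
  · simp only [mul_assoc, map_add, coeff_C_mul, coeff_succ_X_mul]
    simp only [coeff_mul, compSeries, coeff_mk, geomSeries, sum_compositions_succ, nestedSum,
      sum_range_succ, List.length_cons, mul_add, sum_add_distrib, mul_sum]
    congr 1
    exact sum_congr rfl fun kl _ => sum_congr rfl fun K _ => by ring

lemma compSeries_zero_succ (c : R) (x : ℕ → R) (M : ℕ) :
    compSeries 0 c x (M + 1) =
      (1 + C ((c - 1) * x M) * X) * geomSeries (x M) * compSeries 0 c x M := by
  rw [compSeries_succ, add_zero]
  simp only [map_mul, map_sub, map_one]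
  linear_combination -compSeries 0 c x M * one_sub_mul_geomSeries (x M)

lemma one_sub_mul_compSeries_one_succ (c : R) (x : ℕ → R) (M : ℕ) :
    (1 - C ((1 + c) * x M) * X) * compSeries 1 c x (M + 1) =
      (1 - C (x M) * X) * compSeries 1 c x M := by
  have h := compSeries_succ 1 c x M
  simp only [map_mul, map_add, map_one] at h ⊢
  linear_combination (1 - C (x M) * X) * h +
    (C c * C (x M) * X * compSeries 1 c x (M + 1)) * one_sub_mul_geomSeries (x M)

-- Both sides are the product of `(1 + x i X) / (1 - x i X)` over `i < M`.
lemma compSeries_one_neg_two (x : ℕ → R) (M : ℕ) :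
    compSeries 1 (-2) (-x) M = compSeries 0 2 x M := by
  induction M with
  | zero => simp only [compSeries_zero]
  | succ M ih =>
    have hstar := one_sub_mul_compSeries_one_succ (-2) (-x) M
    have hgeom := one_sub_mul_geomSeries (x M)
    rw [ih] at hstar
    rw [compSeries_zero_succ]
    norm_num at hstar ⊢
    linear_combination geomSeries (x M) * hstar - compSeries 1 (-2) (-x) (M + 1) * hgeom

/-- The summand, at first summation index `i`, of the generating series of the nested sums over all
admissible indices `k :: K`, with the factor `c ^ K.length`. -/
noncomputable def headSeries (s : ℕ) (c : R) (x : ℕ → R) (i : ℕ) : R⟦X⟧ :=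
  C (x i ^ 2) * geomSeries (x i) * compSeries s c x (i + s)

lemma coeff_headSeries (s : ℕ) (c : R) (x : ℕ → R) (i j : ℕ) :
    coeff j (headSeries s c x i) = ∑ kl ∈ antidiagonal j, ∑ K ∈ compositions kl.2,
      c ^ K.length * (x i ^ (kl.1 + 2) * nestedSum s x K (i + s)) := by
  simp only [headSeries, mul_assoc, coeff_C_mul]
  simp only [coeff_mul, geomSeries, compSeries, coeff_mk, mul_sum]
  exact sum_congr rfl fun kl _ => sum_congr rfl fun K _ => by ring

lemma headSeries_one_neg_two (x : ℕ → R) (i : ℕ) :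
    headSeries 1 (-2) (-x) i = headSeries 0 2 x i := by
  have hgeom := one_sub_mul_geomSeries (-x i)
  simp only [headSeries, compSeries_one_neg_two, compSeries_zero_succ, Pi.neg_apply, neg_sq,
    add_zero, mul_assoc]
  congr 1
  norm_num at hgeom ⊢
  linear_combination geomSeries (x i) * compSeries 0 2 x i * hgeom

end GeneratingSeries

section ChainSums

open scoped ENNReal

/-- The sequences `(i₁, …, iₙ)` in `S` with `i_b < i_a + s` for `a < b`: the strictly decreasing
ones for `s = 0` and the weakly decreasing ones for `s = 1`. -/
def chains (s : ℕ) (S : Set ℕ) (n : ℕ) : Set (Fin n → ℕ) :=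
  {m | (∀ a, m a ∈ S) ∧ ∀ a b, a < b → m b < m a + s}

lemma cons_mem_chains {s : ℕ} (hs : s ≤ 1) {S : Set ℕ} (hS : IsLowerSet S) {n : ℕ} {i : ℕ}
    {m : Fin n → ℕ} :
    (Fin.cons i m : Fin (n + 1) → ℕ) ∈ chains s S (n + 1) ↔
      i ∈ S ∧ m ∈ chains s (Set.Iio (i + s)) n := by
  simp only [chains, Set.mem_ofPred_eq, Fin.forall_fin_succ, Fin.cons_zero, Fin.cons_succ,
    Fin.not_lt_zero, Fin.succ_pos, Fin.succ_lt_succ_iff, IsEmpty.forall_iff, true_and, forall_const,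
    Set.mem_Iio]
  exact ⟨fun h => ⟨h.1.1, h.2⟩, fun h => ⟨⟨h.1, fun a => hS (by grind) h.1⟩, h.2⟩⟩

/-- The sum of `y (i₁) ^ k₁ ⋯ y (iₙ) ^ kₙ` over the chains in `S`, for the index `(k₁, …, kₙ)`. Its
values are extended nonnegative reals, so that sums can be rearranged freely. -/
noncomputable def chainSum (s : ℕ) (S : Set ℕ) (y : ℕ → ℝ≥0∞) (K : List ℕ) : ℝ≥0∞ :=
  ∑' m : Fin K.length → ℕ, (chains s S K.length).indicator (fun m => ∏ a, y (m a) ^ K.get a) m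

lemma chainSum_nil (s : ℕ) (S : Set ℕ) (y : ℕ → ℝ≥0∞) : chainSum s S y [] = 1 := by
  simp [chainSum, chains]

lemma chainSum_cons {s : ℕ} (hs : s ≤ 1) {S : Set ℕ} (hS : IsLowerSet S) (y : ℕ → ℝ≥0∞) (k : ℕ)
    (K : List ℕ) :
    chainSum s S y (k :: K) =
      ∑' i, S.indicator (fun i => y i ^ k * chainSum s (Set.Iio (i + s)) y K) i := by
  refine ((Fin.consEquiv fun _ : Fin (K.length + 1) => ℕ).tsum_eq _).symm.trans ?_
  rw [ENNReal.tsum_prod']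
  refine tsum_congr fun i => ?_
  have hmem (m : Fin K.length → ℕ) := cons_mem_chains (i := i) (m := m) hs hS
  by_cases hi : i ∈ S
  · simp only [Set.indicator_of_mem hi, chainSum, ← ENNReal.tsum_mul_left]
    refine tsum_congr fun m => ?_
    by_cases hm : m ∈ chains s (Set.Iio (i + s)) K.length
    · rw [Set.indicator_of_mem hm]
      refine (Set.indicator_of_mem ((hmem m).2 ⟨hi, hm⟩) _).trans ?_
      exact Fin.prod_univ_succ (n := K.length) _
    · rw [Set.indicator_of_notMem hm, mul_zero]
      exact Set.indicator_of_notMem (fun h => hm ((hmem m).1 h).2) _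
  · simp only [Set.indicator_of_notMem hi, ENNReal.tsum_eq_zero]
    exact fun m => Set.indicator_of_notMem (fun h => hi ((hmem m).1 h).1) _

lemma chainSum_Iio {s : ℕ} (hs : s ≤ 1) (y : ℕ → ℝ≥0∞) (K : List ℕ) (M : ℕ) :
    chainSum s (Set.Iio M) y K = nestedSum s y K M := by
  induction K generalizing M with
  | nil => exact chainSum_nil s _ y
  | cons k K ih =>
    rw [chainSum_cons hs (isLowerSet_Iio M), nestedSum, ← coe_range, ← sum_eq_tsum_indicator]
    simp only [ih]

lemma chainSum_univ_cons {s : ℕ} (hs : s ≤ 1) (y : ℕ → ℝ≥0∞) (k : ℕ) (K : List ℕ) :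
    chainSum s Set.univ y (k :: K) = ∑' i, y i ^ k * nestedSum s y K (i + s) := by
  simp only [chainSum_cons hs isLowerSet_univ, Set.indicator_univ, chainSum_Iio hs]

lemma tsum_indicator_chains {s : ℕ} (hs : s ≤ 1) {x : ℕ → ℝ} (hx : ∀ i, 0 ≤ x i) (k : ℕ)
    (K : List ℕ) :
    ∑' m, (chains s Set.univ (k :: K).length).indicator (fun m => ∏ a, x (m a) ^ (k :: K).get a) m =
      ∑' i, x i ^ k * nestedSum s x K (i + s) := by
  have hprod (m : Fin (k :: K).length → ℕ) : 0 ≤ ∏ a, x (m a) ^ (k :: K).get a :=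
    prod_nonneg fun _ _ => pow_nonneg (hx _) _
  have h := congrArg ENNReal.toReal (chainSum_univ_cons hs (fun i => ENNReal.ofReal (x i)) k K)
  simp only [nestedSum_ofReal hx, ← ENNReal.ofReal_pow (hx _),
    ← ENNReal.ofReal_mul (pow_nonneg (hx _) _), chainSum,
    ← ENNReal.ofReal_prod_of_nonneg fun _ _ => pow_nonneg (hx _) _] at h
  rw [ENNReal.tsum_toReal_eq, ENNReal.tsum_toReal_eq fun i => ENNReal.ofReal_ne_top] at h
  · convert h using 3 with m i
    · by_cases hm : m ∈ chains s Set.univ (k :: K).length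
      · rw [Set.indicator_of_mem hm, Set.indicator_of_mem hm, ENNReal.toReal_ofReal (hprod m)]
      · rw [Set.indicator_of_notMem hm, Set.indicator_of_notMem hm, ENNReal.toReal_zero]
    · rw [ENNReal.toReal_ofReal (mul_nonneg (pow_nonneg (hx i) k) (nestedSum_nonneg hx s K _))]
  · exact fun m => ne_top_of_le_ne_top ENNReal.ofReal_ne_top (Set.indicator_le_self _ _ m)

end ChainSums

section OddReciprocals

open Filter Topology

/-- The reciprocals `1, 1/3, 1/5, …` of the odd numbers. -/
noncomputable def oddInv (i : ℕ) : ℝ := (2 * i + 1 : ℝ)⁻¹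

lemma oddInv_pos (i : ℕ) : 0 < oddInv i := by
  unfold oddInv
  positivity

lemma oddInv_le_one (i : ℕ) : oddInv i ≤ 1 :=
  inv_le_one_of_one_le₀ (by linarith [i.cast_nonneg (α := ℝ)])

lemma oddInv_nonneg (i : ℕ) : 0 ≤ oddInv i := (oddInv_pos i).le

lemma tendsto_oddInv : Tendsto oddInv atTop (𝓝 0) :=
  (tendsto_atTop_add_const_right _ _
    (tendsto_natCast_atTop_atTop.const_mul_atTop two_pos)).inv_tendsto_atTop

lemma oddInv_succ_lt (i : ℕ) : oddInv (i + 1) < oddInv i := by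
  refine inv_strictAnti₀ (by positivity) ?_
  push_cast
  linarith

lemma summable_oddInv_sub_succ : Summable fun i => oddInv i - oddInv (i + 1) :=
  summable_of_sum_range_le (c := oddInv 0) (fun i => (sub_pos.2 (oddInv_succ_lt i)).le) fun n => by
    rw [sum_range_sub']
    exact sub_le_self _ (oddInv_nonneg n)

lemma tsum_ite_odd_and {n : ℕ} {R : Type*} [AddCommMonoid R] [TopologicalSpace R]
    (p : (Fin n → ℕ) → Prop) [DecidablePred p] (f : (Fin n → ℕ) → R) :
    ∑' m, (if (∀ a, Odd (m a)) ∧ p m then f m else 0) =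
      ∑' m : Fin n → ℕ,
        if p (fun a => 2 * m a + 1) then f (fun a => 2 * m a + 1) else 0 := by
  have hinj : Function.Injective fun (m : Fin n → ℕ) a => 2 * m a + 1 :=
    fun m m' h => funext fun a => by simpa using congrFun h a
  rw [← hinj.tsum_eq]
  · simp
  · intro m hm
    have hodd : ∀ a, Odd (m a) := by
      by_contra h
      exact hm (if_neg fun h' => h h'.1)
    choose q hq using hodd
    exact ⟨q, (funext hq).symm⟩

lemma multT_cons (k : ℕ) (K : List ℕ) :
    multT (k :: K) = ∑' i, oddInv i ^ k * nestedSum 0 oddInv K i := by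
  rw [multT, tsum_ite_odd_and]
  refine Eq.trans (tsum_congr fun m => ?_) (tsum_indicator_chains zero_le_one oddInv_nonneg k K)
  simp [Set.indicator_apply, chains, oddInv]

lemma multTStar_cons (k : ℕ) (K : List ℕ) :
    multTStar (k :: K) = ∑' i, oddInv i ^ k * nestedSum 1 oddInv K (i + 1) := by
  rw [multTStar, tsum_ite_odd_and]
  refine Eq.trans (tsum_congr fun m => ?_) (tsum_indicator_chains le_rfl oddInv_nonneg k K)
  simp [Set.indicator_apply, chains, oddInv]

end OddReciprocals

section MultipleTValues

lemma sum_range_oddInv_le (M : ℕ) : ∑ i ∈ range M, oddInv i ≤ 1 + Real.log M := by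
  refine le_trans ?_ (harmonic_le_one_add_log M)
  rw [harmonic, Rat.cast_sum]
  push_cast
  exact sum_le_sum fun i _ => inv_anti₀ (by positivity) (by linarith [i.cast_nonneg (α := ℝ)])

lemma one_add_log_pow_le (n : ℕ) {y : ℝ} (hy : 1 ≤ y) :
    (1 + Real.log y) ^ n ≤ 2 ^ n * n.factorial * Real.exp (1 / 2) * y ^ (1 / 2 : ℝ) := by
  have h := Real.pow_div_factorial_le_exp ((1 + Real.log y) / 2)
    (by linarith [Real.log_nonneg hy]) n
  rw [div_le_iff₀ (by positivity), div_pow, div_le_iff₀ (by positivity)] at h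
  refine h.trans_eq ?_
  rw [Real.rpow_def_of_pos (by positivity), add_div, Real.exp_add]
  ring_nf

lemma nestedSum_oddInv_le {s : ℕ} (hs : s ≤ 1) {K : List ℕ} (hK : ∀ l ∈ K, 0 < l) (i : ℕ) :
    nestedSum s oddInv K (i + s) ≤
      2 ^ K.length * K.length.factorial * Real.exp (1 / 2) * ((i + 1 : ℕ) : ℝ) ^ (1 / 2 : ℝ) := by
  calc nestedSum s oddInv K (i + s) ≤ (∑ l ∈ range (i + s), oddInv l) ^ K.length :=
        nestedSum_le oddInv_nonneg oddInv_le_one hs hK _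
    _ ≤ (1 + Real.log (i + 1 : ℕ)) ^ K.length := by
        refine pow_le_pow_left₀ (sum_nonneg fun l _ => oddInv_nonneg l) ?_ _
        refine le_trans ?_ (sum_range_oddInv_le (i + 1))
        exact sum_le_sum_of_subset_of_nonneg (range_mono (Nat.add_le_add_left hs i))
          fun l _ _ => oddInv_nonneg l
    _ ≤ _ := one_add_log_pow_le _ (by simp)

lemma summable_oddInv_pow_mul_nestedSum {s : ℕ} (hs : s ≤ 1) {k : ℕ} (hk : 2 ≤ k) {K : List ℕ}
    (hK : ∀ l ∈ K, 0 < l) :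
    Summable fun i => oddInv i ^ k * nestedSum s oddInv K (i + s) := by
  have hsum : Summable fun i : ℕ => ((i + 1 : ℕ) : ℝ) ^ (-(3 / 2) : ℝ) :=
    (summable_nat_add_iff 1).2 (Real.summable_nat_rpow.2 (by norm_num))
  set c : ℝ := 2 ^ K.length * K.length.factorial * Real.exp (1 / 2)
  refine Summable.of_nonneg_of_le (fun i => mul_nonneg (pow_nonneg (oddInv_nonneg i) k)
    (nestedSum_nonneg oddInv_nonneg s K _)) (fun i => ?_) (hsum.mul_left c)
  have hhead : oddInv i ^ k ≤ ((i + 1 : ℕ) : ℝ) ^ (-2 : ℝ) := by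
    calc oddInv i ^ k ≤ oddInv i ^ 2 :=
          pow_le_pow_of_le_one (oddInv_nonneg i) (oddInv_le_one i) hk
      _ ≤ (((i + 1 : ℕ) : ℝ)⁻¹) ^ 2 := by
          refine pow_le_pow_left₀ (oddInv_nonneg i) (inv_anti₀ (by positivity) ?_) 2
          push_cast
          linarith [i.cast_nonneg (α := ℝ)]
      _ = ((i + 1 : ℕ) : ℝ) ^ (-2 : ℝ) := by
          rw [inv_pow, Real.rpow_neg (by positivity), Real.rpow_ofNat]
  calc oddInv i ^ k * nestedSum s oddInv K (i + s)
      ≤ ((i + 1 : ℕ) : ℝ) ^ (-2 : ℝ) * (c * ((i + 1 : ℕ) : ℝ) ^ (1 / 2 : ℝ)) :=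
        mul_le_mul hhead (nestedSum_oddInv_le hs hK i) (nestedSum_nonneg oddInv_nonneg s K _)
          (by positivity)
    _ = _ := by
        rw [show (-(3 / 2) : ℝ) = -2 + 1 / 2 by norm_num, Real.rpow_add (by positivity)]
        ring

lemma hasSum_multT {k : ℕ} (hk : 2 ≤ k) {K : List ℕ} (hK : ∀ l ∈ K, 0 < l) :
    HasSum (fun i => oddInv i ^ k * nestedSum 0 oddInv K i) (multT (k :: K)) :=
  multT_cons k K ▸ (summable_oddInv_pow_mul_nestedSum zero_le_one hk hK).hasSum

lemma hasSum_multTStar {k : ℕ} (hk : 2 ≤ k) {K : List ℕ} (hK : ∀ l ∈ K, 0 < l) :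
    HasSum (fun i => oddInv i ^ k * nestedSum 1 oddInv K (i + 1)) (multTStar (k :: K)) :=
  multTStar_cons k K ▸ (summable_oddInv_pow_mul_nestedSum le_rfl hk hK).hasSum

open PowerSeries

lemma hasSum_coeff_headSeries (j : ℕ) :
    HasSum (fun i => coeff j (headSeries 0 2 oddInv i))
      (∑ n ∈ range (j + 1), 2 ^ n * G0d (j + 2) (n + 1)) := by
  simp only [G0d, coeff_headSeries, sum_range_mul_tsum_admissible]
  exact hasSum_sum fun kl _ => hasSum_sum fun K hK =>
    (hasSum_multT (by omega) (mem_compositions.1 hK).1).mul_left _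

lemma hasSum_coeff_headSeries_star (j : ℕ) :
    HasSum (fun i => coeff j (headSeries 0 2 oddInv i))
      (∑ n ∈ range (j + 1), (-1) ^ (j - n) * 2 ^ n * G0dStar (j + 2) (n + 1)) := by
  simp only [G0dStar, ← headSeries_one_neg_two, coeff_headSeries,
    sum_range_mul_tsum_admissible j fun n => (-1) ^ (j - n) * 2 ^ n]
  refine hasSum_sum fun kl hkl => hasSum_sum fun K hK => ?_
  obtain ⟨hpos, hsum⟩ := mem_compositions.1 hK
  have hlen := length_le_of_mem_compositions hK
  have hkl := mem_antidiagonal.1 hkl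
  have hsign : (-1 : ℝ) ^ (K.length + (kl.1 + 2 + K.sum)) = (-1) ^ (j - K.length) :=
    neg_one_pow_congr (by grind)
  have hterm (i : ℕ) :
      (-2) ^ K.length * ((-oddInv) i ^ (kl.1 + 2) * nestedSum 1 (-oddInv) K (i + 1)) =
        (-1) ^ (j - K.length) * 2 ^ K.length *
          (oddInv i ^ (kl.1 + 2) * nestedSum 1 oddInv K (i + 1)) := by
    rw [nestedSum_neg, Pi.neg_apply, neg_pow (oddInv i), neg_pow (2 : ℝ), ← hsign]
    ring
  simp only [hterm]
  exact (hasSum_multTStar (by omega) hpos).mul_left _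

end MultipleTValues

section Evaluation

open PowerSeries

/-- The real power series `f` converges at `u` to `v`; for real series, convergence in the sense of
`HasSum` is absolute. -/
def EvaluatesTo (f : ℝ⟦X⟧) (u v : ℝ) : Prop := HasSum (fun n => coeff n f * u ^ n) v

variable {f g : ℝ⟦X⟧} {u v w : ℝ}

lemma evaluatesTo_C (a u : ℝ) : EvaluatesTo (C a) u a := by
  simpa [EvaluatesTo] using hasSum_single (f := fun n => coeff n (C a) * u ^ n) 0
    fun n hn => by simp [coeff_C, hn]

lemma evaluatesTo_X (u : ℝ) : EvaluatesTo X u u := by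
  simpa [EvaluatesTo] using hasSum_single (f := fun n => coeff n (X : ℝ⟦X⟧) * u ^ n) 1
    fun n hn => by simp [coeff_X, hn]

lemma EvaluatesTo.add (hf : EvaluatesTo f u v) (hg : EvaluatesTo g u w) :
    EvaluatesTo (f + g) u (v + w) := by
  simpa [EvaluatesTo, add_mul] using HasSum.add hf hg

lemma EvaluatesTo.mul (hf : EvaluatesTo f u v) (hg : EvaluatesTo g u w) :
    EvaluatesTo (f * g) u (v * w) := by
  have hcoeff (n : ℕ) : coeff n (f * g) * u ^ n =
      ∑ kl ∈ antidiagonal n, coeff kl.1 f * u ^ kl.1 * (coeff kl.2 g * u ^ kl.2) := by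
    rw [coeff_mul, sum_mul]
    refine sum_congr rfl fun kl hkl => ?_
    rw [← mem_antidiagonal.1 hkl]
    ring
  have hf' := hf.summable.norm
  have hg' := hg.summable.norm
  simp only [EvaluatesTo, hcoeff]
  rw [← hf.tsum_eq, ← hg.tsum_eq,
    tsum_mul_tsum_eq_tsum_sum_antidiagonal_of_summable_norm hf' hg']
  exact (summable_norm_sum_mul_antidiagonal_of_summable_norm hf' hg').of_norm.hasSum

lemma evaluatesTo_geomSeries {y : ℝ} (h : |y * u| < 1) :
    EvaluatesTo (geomSeries y) u (1 - y * u)⁻¹ := by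
  simpa [EvaluatesTo, geomSeries, ← mul_pow] using hasSum_geometric_of_abs_lt_one h

lemma evaluatesTo_compSeries_zero_two {x : ℕ → ℝ} (h : ∀ i, |x i * u| < 1) (M : ℕ) :
    EvaluatesTo (compSeries 0 2 x M) u (∏ i ∈ range M, (1 + x i * u) / (1 - x i * u)) := by
  induction M with
  | zero => simpa [compSeries_zero] using evaluatesTo_C 1 u
  | succ M ih =>
    have hnum : EvaluatesTo (1 + C ((2 - 1) * x M) * X) u (1 + x M * u) := by
      convert (evaluatesTo_C 1 u).add ((evaluatesTo_C (x M) u).mul (evaluatesTo_X u)) using 2 <;>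
        norm_num
    rw [compSeries_zero_succ, prod_range_succ_comm, div_eq_mul_inv]
    exact (hnum.mul (evaluatesTo_geomSeries (h M))).mul ih

lemma evaluatesTo_headSeries_zero_two {x : ℕ → ℝ} (h : ∀ i, |x i * u| < 1) (i : ℕ) :
    EvaluatesTo (headSeries 0 2 x i) u
      (x i ^ 2 * (1 - x i * u)⁻¹ * ∏ l ∈ range i, (1 + x l * u) / (1 - x l * u)) :=
  ((evaluatesTo_C _ u).mul (evaluatesTo_geomSeries (h i))).mul (evaluatesTo_compSeries_zero_two h i)

lemma coeff_headSeries_nonneg {x : ℕ → ℝ} (hx : ∀ i, 0 ≤ x i) (i j : ℕ) :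
    0 ≤ coeff j (headSeries 0 2 x i) := by
  rw [coeff_headSeries]
  exact sum_nonneg fun kl _ => sum_nonneg fun K _ =>
    mul_nonneg (by positivity) (mul_nonneg (pow_nonneg (hx i) _) (nestedSum_nonneg hx _ K _))

lemma hasSum_mul_pow_of_evaluatesTo {F : ℕ → ℝ⟦X⟧} {a b c : ℕ → ℝ} (hF : ∀ i j, 0 ≤ coeff j (F i))
    (ha : ∀ j, HasSum (fun i => coeff j (F i)) (a j)) (hb : ∀ i, EvaluatesTo (F i) u (b i))
    (hc : ∀ i, EvaluatesTo (F i) |u| (c i)) (hcs : Summable c) :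
    HasSum (fun j => a j * u ^ j) (∑' i, b i) := by
  have habs : Summable fun p : ℕ × ℕ => coeff p.2 (F p.1) * |u| ^ p.2 :=
    (summable_prod_of_nonneg fun p => mul_nonneg (hF _ _) (by positivity)).2
      ⟨fun i => (hc i).summable, hcs.congr fun i => (hc i).tsum_eq.symm⟩
  have hsum : Summable fun p : ℕ × ℕ => coeff p.2 (F p.1) * u ^ p.2 :=
    .of_norm <| habs.congr fun p => by simp [abs_of_nonneg (hF _ _)]
  have h := (Equiv.prodComm ℕ ℕ).hasSum_iff.2 hsum.hasSum
  rw [(hsum.hasSum.prod_fiberwise hb).tsum_eq]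
  exact h.prod_fiberwise fun j => (ha j).mul_right _

end Evaluation

section Asymptotics

open Filter Topology Asymptotics

lemma tendsto_prod_div_mul_rpow (b c : ℝ) :
    Tendsto (fun n : ℕ => (∏ i ∈ range (n + 1), (b + i) / (c + i)) * (n : ℝ) ^ (c - b)) atTop
      (𝓝 (Real.Gamma c / Real.Gamma b)) := by
  by_cases hb : Real.Gamma b = 0
  · obtain ⟨m, rfl⟩ := (Real.Gamma_eq_zero_iff b).1 hb
    rw [hb, div_zero]
    refine tendsto_const_nhds.congr' ?_
    filter_upwards [eventually_ge_atTop m] with n hn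
    rw [prod_eq_zero (mem_range.2 (Nat.lt_succ_of_le hn)) (by simp), zero_mul]
  · refine ((Real.GammaSeq_tendsto_Gamma c).div (Real.GammaSeq_tendsto_Gamma b) hb).congr' ?_
    filter_upwards [eventually_gt_atTop 0] with n hn
    have hn' : (n : ℝ) ^ b ≠ 0 := by positivity
    have hfac : (n.factorial : ℝ) ≠ 0 := by positivity
    rw [Pi.div_apply, Real.GammaSeq, Real.GammaSeq, Real.rpow_sub (by positivity), prod_div_distrib,
      div_div_div_eq]
    field_simp

lemma tsum_eq_of_telescoping {M : Type*} [AddCommGroup M] [TopologicalSpace M]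
    [IsTopologicalAddGroup M] [T2Space M] {f g : ℕ → M} (hf : Summable f)
    (h : ∀ j, f j = g j - g (j + 1)) (hg : Tendsto g atTop (𝓝 0)) : ∑' j, f j = g 0 := by
  obtain rfl : f = fun j => g j - g (j + 1) := funext h
  have hlim := hf.hasSum.tendsto_sum_nat
  simp only [sum_range_sub'] at hlim
  simpa using tendsto_nhds_unique hlim (hg.const_sub (g 0))

end Asymptotics

section DixonSum

open Filter Topology Asymptotics

/-- The quotient of shifted factorials `((1 - v) / 2)ₙ / ((1 + v) / 2)ₙ`. -/
noncomputable def oddRatio (v : ℝ) (n : ℕ) : ℝ :=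
  ∏ i ∈ range n, (2 * (i : ℝ) + 1 - v) / (2 * i + 1 + v)

/-- The general term of `dixonSum`. -/
noncomputable def dixonTerm (v : ℝ) (j : ℕ) : ℝ :=
  oddRatio v j / ((2 * j + 1) * (2 * j + 1 + v))

/-- The well-poised sum `(1 + v)⁻¹ ₃F₂(1, 1/2, (1 - v)/2; 3/2, (3 + v)/2; 1)`, an instance of
Dixon's summation. -/
noncomputable def dixonSum (v : ℝ) : ℝ := ∑' j, dixonTerm v j

variable {v : ℝ}

lemma oddRatio_zero (v : ℝ) : oddRatio v 0 = 1 := prod_range_zero _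

lemma oddRatio_succ (v : ℝ) (j : ℕ) :
    oddRatio v (j + 1) = oddRatio v j * ((2 * (j : ℝ) + 1 - v) / (2 * j + 1 + v)) :=
  prod_range_succ _ _

lemma oddRatio_zero_left (n : ℕ) : oddRatio 0 n = 1 :=
  prod_eq_one fun i _ => by rw [sub_zero, add_zero, div_self (by positivity)]

lemma two_mul_add_one_add_pos (hv : -1 < v) (j : ℕ) : 0 < 2 * (j : ℝ) + 1 + v := by
  linarith [j.cast_nonneg (α := ℝ)]

lemma oddRatio_succ_isBigO (v : ℝ) :
    (fun n => oddRatio v (n + 1)) =O[atTop] fun n => (n : ℝ) ^ (-v) := by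
  have h := (tendsto_prod_div_mul_rpow ((1 - v) / 2) ((1 + v) / 2)).isBigO_one ℝ
  refine (h.mul (isBigO_refl (fun n : ℕ => (n : ℝ) ^ (-v)) atTop)).congr' ?_ (by simp)
  filter_upwards [eventually_gt_atTop 0] with n hn
  have hprod : ∏ i ∈ range (n + 1), ((1 - v) / 2 + i) / ((1 + v) / 2 + i) = oddRatio v (n + 1) :=
    prod_congr rfl fun i _ => by
      rw [← mul_div_mul_left _ _ (two_ne_zero (α := ℝ))]
      ring_nf
  rw [hprod, mul_assoc, ← Real.rpow_add (by positivity)]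
  ring_nf
  simp

lemma tendsto_oddRatio_mul {v s : ℝ} (hs : s < v) {g : ℕ → ℝ}
    (hg : (fun n => g (n + 1)) =O[atTop] fun n => (n : ℝ) ^ s) :
    Tendsto (fun n => oddRatio v n * g n) atTop (𝓝 0) := by
  rw [← tendsto_add_atTop_iff_nat 1]
  refine ((oddRatio_succ_isBigO v).mul hg).trans_tendsto ?_
  refine ((tendsto_rpow_neg_atTop (sub_pos.2 hs)).comp tendsto_natCast_atTop_atTop).congr' ?_
  filter_upwards [eventually_gt_atTop 0] with n hn
  rw [← Real.rpow_add (by positivity), Function.comp_apply]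
  ring_nf

lemma summable_dixonTerm (hv : -1 < v) : Summable (dixonTerm v) := by
  have hden : (fun n : ℕ => ((2 * ((n + 1 : ℕ) : ℝ) + 1) * (2 * ((n + 1 : ℕ) : ℝ) + 1 + v))⁻¹)
      =O[atTop] fun n : ℕ => (n : ℝ) ^ (-2 : ℝ) := by
    refine IsBigO.of_bound' ?_
    filter_upwards [eventually_gt_atTop 0] with n hn
    have hn' : (0 : ℝ) < n := by positivity
    have hpos := two_mul_add_one_add_pos hv (n + 1)
    rw [Real.rpow_neg hn'.le, Real.rpow_ofNat, norm_inv, norm_inv, Real.norm_eq_abs,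
      Real.norm_eq_abs, abs_of_pos (by positivity), abs_of_pos (by positivity), sq]
    push_cast
    gcongr <;> linarith
  refine (summable_nat_add_iff 1).1 (summable_of_isBigO_nat
    (Real.summable_nat_rpow.2 (show -v - 2 < -1 by linarith))
    (((oddRatio_succ_isBigO v).mul hden).congr' (.of_forall fun n => ?_) ?_))
  · exact (div_eq_mul_inv _ _).symm
  · filter_upwards [eventually_gt_atTop 0] with n hn
    rw [← Real.rpow_add (by positivity), sub_eq_add_neg]

lemma oddRatio_add_two (hv : -1 < v) (j : ℕ) :
    oddRatio (v + 2) j * ((2 * j - 1 - v) * (2 * j + 1 + v)) = -oddRatio v j * (1 + v) ^ 2 := by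
  induction j with
  | zero => simp [oddRatio_zero]; ring
  | succ j ih =>
    have hpos := two_mul_add_one_add_pos hv j
    have hpos' : 0 < 2 * (j : ℝ) + 1 + (v + 2) := by linarith
    rw [oddRatio_succ, oddRatio_succ]
    push_cast
    rw [show 2 * ((j : ℝ) + 1) + 1 + v = 2 * (j : ℝ) + 1 + (v + 2) by ring]
    field_simp
    linear_combination (2 * (j : ℝ) + 1 - v) * ih

-- The right-hand side is the certificate found by Zeilberger's algorithm.
lemma dixonTerm_sub_dixonTerm_add_two (hv : -1 < v) (j : ℕ) :
    (1 + v) ^ 2 * dixonTerm v j - (v + 2) ^ 2 * dixonTerm (v + 2) j =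
      oddRatio (v + 2) j * (-j / (1 + v)) -
        oddRatio (v + 2) (j + 1) * (-(j + 1 : ℕ) / (1 + v)) := by
  have hpos := two_mul_add_one_add_pos hv j
  have hpos' : 0 < 2 * (j : ℝ) + 1 + (v + 2) := by linarith
  have hv₁ : 1 + v ≠ 0 := by linarith
  have hratio : oddRatio v j =
      -(oddRatio (v + 2) j * ((2 * j - 1 - v) * (2 * j + 1 + v))) / (1 + v) ^ 2 := by
    rw [oddRatio_add_two hv]
    field_simp
  rw [dixonTerm, dixonTerm, hratio, oddRatio_succ]
  push_cast
  field_simp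
  ring

lemma dixonSum_add_two (hv : -1 < v) :
    (v + 2) ^ 2 * dixonSum (v + 2) = (1 + v) ^ 2 * dixonSum v := by
  have hsum := (summable_dixonTerm hv).mul_left ((1 + v) ^ 2)
  have hsum' := (summable_dixonTerm (by linarith : -1 < v + 2)).mul_left ((v + 2) ^ 2)
  have hlim : Tendsto (fun j : ℕ => oddRatio (v + 2) j * (-j / (1 + v))) atTop (𝓝 0) := by
    refine tendsto_oddRatio_mul (s := 1) (by linarith) (.of_bound (2 / (1 + v)) ?_)
    filter_upwards [eventually_ge_atTop 1] with n hn
    have hn' : (1 : ℝ) ≤ n := by exact_mod_cast hn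
    have hv₁ : 0 < 1 + v := by linarith
    rw [norm_div, norm_neg, Real.norm_natCast, Real.norm_of_nonneg hv₁.le, Real.rpow_one,
      Real.norm_natCast, div_mul_eq_mul_div]
    gcongr
    push_cast
    linarith
  have h := tsum_eq_of_telescoping (hsum.sub hsum') (dixonTerm_sub_dixonTerm_add_two hv) hlim
  rw [hsum.tsum_sub hsum', tsum_mul_left, tsum_mul_left] at h
  simp only [Nat.cast_zero, neg_zero, zero_div, mul_zero] at h
  exact (sub_eq_zero.1 h).symm

lemma dixonSum_add_two_mul (hv : -1 < v) (N : ℕ) :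
    dixonSum (2 * N + v) =
      (∏ i ∈ range N, ((2 * (i : ℝ) + 1 + v) / (2 * i + 2 + v)) ^ 2) * dixonSum v := by
  induction N with
  | zero => simp
  | succ N ih =>
    have h := dixonSum_add_two (v := 2 * N + v) (by linarith [N.cast_nonneg (α := ℝ)])
    have hne : 2 * (N : ℝ) + 2 + v ≠ 0 := by linarith [N.cast_nonneg (α := ℝ)]
    rw [prod_range_succ_comm, mul_assoc, ← ih, div_pow, div_mul_eq_mul_div,
      eq_div_iff (pow_ne_zero 2 hne)]
    push_cast
    rw [show 2 * ((N : ℝ) + 1) + v = 2 * N + v + 2 by ring]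
    linear_combination h

lemma abs_oddRatio_le_one (hv : 0 ≤ v) (j : ℕ) : |oddRatio v j| ≤ 1 := by
  rw [oddRatio, abs_prod]
  refine prod_le_one (fun _ _ => abs_nonneg _) fun i _ => ?_
  rw [abs_div, div_le_one (by positivity), abs_of_pos (show 0 < 2 * (i : ℝ) + 1 + v by positivity),
    abs_le]
  constructor <;> linarith [i.cast_nonneg (α := ℝ)]

lemma norm_one_sub_mul_oddInv_sub_succ_le {t : ℝ} (ht : |t| ≤ 1) (i : ℕ) :
    ‖(1 - t) * (oddInv i - oddInv (i + 1))‖ ≤ 2 * (oddInv i - oddInv (i + 1)) := by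
  have hpos := sub_pos.2 (oddInv_succ_lt i)
  rw [norm_mul, Real.norm_of_nonneg hpos.le, Real.norm_eq_abs]
  gcongr
  exact (abs_sub _ _).trans (by rw [abs_one]; linarith)

-- Summation by parts: `2 * v * dixonTerm v j = (oddRatio v j - oddRatio v (j + 1)) * oddInv j`.
lemma two_mul_dixonSum (hv : 0 ≤ v) :
    2 * v * dixonSum v = ∑' j, (1 - oddRatio v (j + 1)) * (oddInv j - oddInv (j + 1)) := by
  have hv' : -1 < v := by linarith
  have hsum := (summable_dixonTerm hv').mul_left (2 * v)
  have hsum' : Summable fun j => (1 - oddRatio v (j + 1)) * (oddInv j - oddInv (j + 1)) :=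
    .of_norm_bounded (summable_oddInv_sub_succ.mul_left 2) fun j =>
      norm_one_sub_mul_oddInv_sub_succ_le (abs_oddRatio_le_one hv _) j
  have hlim : Tendsto (fun j => (oddRatio v j - 1) * oddInv j) atTop (𝓝 0) := by
    refine squeeze_zero_norm (fun j => ?_) (by simpa using tendsto_oddInv.const_mul 2)
    rw [norm_mul, Real.norm_of_nonneg (oddInv_nonneg j), Real.norm_eq_abs]
    refine mul_le_mul_of_nonneg_right ((abs_sub _ _).trans ?_) (oddInv_nonneg j)
    linarith [abs_oddRatio_le_one hv j, abs_one (α := ℝ)]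
  have h := tsum_eq_of_telescoping (hsum.sub hsum') (fun j => by
    have := two_mul_add_one_add_pos hv' j
    rw [dixonTerm, oddRatio_succ, oddInv, oddInv]
    push_cast
    field_simp
    ring) hlim
  rw [hsum.tsum_sub hsum', tsum_mul_left, oddRatio_zero, sub_self, zero_mul] at h
  exact sub_eq_zero.1 h

lemma tendsto_oddRatio_atTop (n : ℕ) : Tendsto (oddRatio · n) atTop (𝓝 ((-1) ^ n)) := by
  rw [← card_range n, ← prod_const, card_range]
  refine tendsto_finsetProd _ fun i _ => ?_
  have h : Tendsto (fun v : ℝ => 2 * (2 * (i : ℝ) + 1) / (2 * i + 1 + v) - 1) atTop (𝓝 (0 - 1)) :=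
    (tendsto_const_nhds.div_atTop (tendsto_atTop_add_const_left _ _ tendsto_id)).sub_const 1
  rw [zero_sub] at h
  refine h.congr' ?_
  filter_upwards [eventually_ge_atTop 0] with v hv
  field_simp
  ring

lemma exists_tendsto_two_mul_dixonSum :
    ∃ L > 0, Tendsto (fun v => 2 * v * dixonSum v) atTop (𝓝 L) := by
  refine ⟨∑' j, (1 - (-1) ^ (j + 1)) * (oddInv j - oddInv (j + 1)), ?_, ?_⟩
  · refine Summable.tsum_pos (.of_norm_bounded (summable_oddInv_sub_succ.mul_left 2) fun j =>
      norm_one_sub_mul_oddInv_sub_succ_le (by simp) j) (fun j => ?_) 0 ?_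
    · refine mul_nonneg (sub_nonneg.2 ?_) (sub_pos.2 (oddInv_succ_lt j)).le
      exact (le_abs_self _).trans (by simp)
    · exact mul_pos (by norm_num) (sub_pos.2 (oddInv_succ_lt 0))
  · have h : Tendsto (fun v => ∑' j, (1 - oddRatio v (j + 1)) * (oddInv j - oddInv (j + 1))) atTop
        (𝓝 (∑' j, (1 - (-1) ^ (j + 1)) * (oddInv j - oddInv (j + 1)))) := by
      refine tendsto_tsum_of_dominated_convergence (summable_oddInv_sub_succ.mul_left 2)
        (fun j => ((tendsto_oddRatio_atTop _).const_sub 1).mul_const _) ?_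
      filter_upwards [eventually_ge_atTop 0] with v hv j
      exact norm_one_sub_mul_oddInv_sub_succ_le (abs_oddRatio_le_one hv _) j
    refine h.congr' ?_
    filter_upwards [eventually_ge_atTop 0] with v hv
    rw [two_mul_dixonSum hv]

lemma tendsto_dixonSum_add_div (v : ℝ) :
    Tendsto (fun w => dixonSum (w + v) / dixonSum w) atTop (𝓝 1) := by
  obtain ⟨L, hL, hlim⟩ := exists_tendsto_two_mul_dixonSum
  have hadd : Tendsto (fun w : ℝ => w + v) atTop atTop :=
    tendsto_atTop_add_const_right _ _ tendsto_id
  have hratio := (hlim.comp hadd).div hlim hL.ne'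
  have hw : Tendsto (fun w : ℝ => 1 - v / (w + v)) atTop (𝓝 (1 - 0)) :=
    (tendsto_const_nhds.div_atTop hadd).const_sub 1
  have h := hratio.mul hw
  rw [div_self hL.ne', sub_zero, mul_one] at h
  refine h.congr' ?_
  filter_upwards [eventually_gt_atTop 0, eventually_gt_atTop (-v)] with w hw hwv
  have hwv' : w + v ≠ 0 := by linarith
  rw [Pi.div_apply, Function.comp_apply]
  field_simp
  ring

lemma mul_dixonSum_neg {u q : ℝ} (hu : u < 1)
    (hq : Tendsto (fun N => ∏ i ∈ range N,
      ((1 - u / (2 * (i : ℝ) + 1)) / (1 - u / (2 * i + 2))) ^ 2) atTop (𝓝 q)) :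
    q * dixonSum (-u) = dixonSum 0 := by
  have htwo : Tendsto (fun N : ℕ => 2 * (N : ℝ)) atTop atTop :=
    tendsto_natCast_atTop_atTop.const_mul_atTop two_pos
  have hone : q * (dixonSum (-u) / dixonSum 0) = 1 := by
    refine tendsto_nhds_unique ((hq.mul_const _).congr fun N => ?_)
      ((tendsto_dixonSum_add_div (-u)).comp htwo)
    have hzero := dixonSum_add_two_mul (v := 0) (by norm_num) N
    rw [add_zero] at hzero
    rw [Function.comp_apply, dixonSum_add_two_mul (by linarith), hzero, mul_div_mul_comm,
      ← prod_div_distrib]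
    refine congrArg (· * _) (prod_congr rfl fun i _ => ?_)
    have : 2 * (i : ℝ) + 2 - u ≠ 0 := by linarith [i.cast_nonneg (α := ℝ)]
    rw [← div_pow, one_sub_div (by positivity), one_sub_div (by positivity)]
    simp only [add_zero, ← sub_eq_add_neg]
    field_simp
  have hne : dixonSum 0 ≠ 0 := fun h => by simp [h] at hone
  rwa [mul_div_assoc', div_eq_one_iff_eq hne] at hone

end DixonSum

section ProductFormula

open Filter Topology

lemma sum_range_inv_odd_sub_inv_even (N : ℕ) :
    ∑ i ∈ range N, ((2 * (i : ℝ) + 1)⁻¹ - (2 * (i : ℝ) + 2)⁻¹) = harmonic (2 * N) - harmonic N := by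
  induction N with
  | zero => simp
  | succ N ih =>
    rw [sum_range_succ, ih, mul_add_one, harmonic_succ, harmonic_succ, harmonic_succ]
    push_cast
    rw [show 2 * (N : ℝ) + 1 + 1 = 2 * (N + 1) by ring, show 2 * (N : ℝ) + 2 = 2 * (N + 1) by ring]
    field_simp
    ring

lemma tendsto_sum_range_inv_odd_sub_inv_even :
    Tendsto (fun N => ∑ i ∈ range N, ((2 * (i : ℝ) + 1)⁻¹ - (2 * (i : ℝ) + 2)⁻¹)) atTop
      (𝓝 (Real.log 2)) := by
  have h := Real.tendsto_harmonic_sub_log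
  have htwo : Tendsto (2 * · : ℕ → ℕ) atTop atTop := tendsto_id.const_mul_atTop' two_pos
  have hdiff := ((h.comp htwo).sub h).add_const (Real.log 2)
  rw [sub_self, zero_add] at hdiff
  refine hdiff.congr' ?_
  filter_upwards [eventually_gt_atTop 0] with N hN
  rw [sum_range_inv_odd_sub_inv_even, Function.comp_apply, Nat.cast_mul, Nat.cast_two,
    Real.log_mul two_ne_zero (by positivity)]
  ring

lemma hasSum_pow_add_two_div {t : ℝ} (ht : |t| < 1) :
    HasSum (fun n : ℕ => t ^ (n + 2) / ((n : ℝ) + 2)) (-Real.log (1 - t) - t) := by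
  have h := (hasSum_nat_add_iff' 1).2 (Real.hasSum_pow_div_log_of_abs_lt_one ht)
  simpa [add_assoc, one_add_one_eq_two] using h

lemma summable_inv_two_mul_add_pow {k : ℕ} (hk : 2 ≤ k) (a : ℕ) :
    Summable fun i : ℕ => ((2 * (i : ℝ) + a) ^ k)⁻¹ := by
  have hinj : Function.Injective fun i : ℕ => 2 * i + a := fun i j h => by simpa using h
  exact ((Real.summable_nat_pow_inv.2 hk).comp_injective hinj).congr fun i => by simp

lemma summable_inv_odd_pow {k : ℕ} (hk : 2 ≤ k) :
    Summable fun i : ℕ => ((2 * (i : ℝ) + 1) ^ k)⁻¹ := by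
  simpa using summable_inv_two_mul_add_pow hk 1

lemma summable_inv_even_pow {k : ℕ} (hk : 2 ≤ k) :
    Summable fun i : ℕ => ((2 * (i : ℝ) + 2) ^ k)⁻¹ := by
  simpa using summable_inv_two_mul_add_pow hk 2

lemma tsum_inv_even_pow {k : ℕ} (hk : 2 ≤ k) :
    ∑' i : ℕ, ((2 * (i : ℝ) + 2) ^ k)⁻¹ = tval k / (2 ^ k - 1) := by
  let f (m : ℕ) : ℝ := (((m : ℝ) + 1) ^ k)⁻¹
  have hodd : (fun i => f (2 * i)) = fun i : ℕ => ((2 * (i : ℝ) + 1) ^ k)⁻¹ := by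
    ext i
    simp [f]
  have heven : (fun i => f (2 * i + 1)) = fun i : ℕ => ((2 * (i : ℝ) + 2) ^ k)⁻¹ := by
    ext i
    simp [f, add_assoc, one_add_one_eq_two]
  have hscale (i : ℕ) : ((2 * (i : ℝ) + 2) ^ k)⁻¹ = (2 ^ k)⁻¹ * f i := by
    rw [← mul_inv, ← mul_pow, mul_add_one]
  have hadd := tsum_even_add_odd (f := f) (hodd ▸ summable_inv_odd_pow hk)
    (heven ▸ summable_inv_even_pow hk)
  have hpow : (1 : ℝ) < 2 ^ k := one_lt_pow₀ one_lt_two (by omega)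
  rw [hodd, heven] at hadd
  have hmul : ∑' i : ℕ, ((2 * (i : ℝ) + 2) ^ k)⁻¹ = (2 ^ k)⁻¹ * ∑' m, f m := by
    rw [← tsum_mul_left]
    exact tsum_congr hscale
  rw [← hadd, inv_mul_eq_div, eq_div_iff (by positivity)] at hmul
  simp only [tval, one_div]
  rw [eq_div_iff (by linarith)]
  linear_combination hmul

lemma tsum_inv_odd_pow_sub_inv_even_pow {k : ℕ} (hk : 2 ≤ k) :
    ∑' i : ℕ, (((2 * (i : ℝ) + 1) ^ k)⁻¹ - ((2 * (i : ℝ) + 2) ^ k)⁻¹) =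
      (2 ^ k - 2) / (2 ^ k - 1) * tval k := by
  have hpow : (1 : ℝ) < 2 ^ k := one_lt_pow₀ one_lt_two (by omega)
  have : (2 : ℝ) ^ k - 1 ≠ 0 := by linarith
  rw [(summable_inv_odd_pow hk).tsum_sub (summable_inv_even_pow hk), tsum_inv_even_pow hk]
  simp only [tval, one_div]
  field_simp
  ring

/-- The general term of the exponent in `weighted_sum_generating_function`, with `n` shifted by
`2`. -/
noncomputable def exponentTerm (u : ℝ) (n : ℕ) : ℝ :=
  4 * (2 ^ (n + 1) - 1) / ((n + 2) * (2 ^ (n + 2) - 1)) * tval (n + 2) * u ^ (n + 2)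

/-- The coefficient of `u ^ (n + 2)` in the logarithm of the inverse square of
`(1 - u / (2 * i + 1)) / (1 - u / (2 * i + 2))`, multiplied by `u ^ (n + 2)`. -/
noncomputable def logTerm (u : ℝ) (i n : ℕ) : ℝ :=
  2 / (n + 2) * u ^ (n + 2) * (((2 * (i : ℝ) + 1) ^ (n + 2))⁻¹ - ((2 * (i : ℝ) + 2) ^ (n + 2))⁻¹)

variable {u : ℝ}

lemma tsum_logTerm_left (u : ℝ) (n : ℕ) : ∑' i, logTerm u i n = exponentTerm u n := by
  have hpow : (1 : ℝ) < 2 ^ (n + 2) := one_lt_pow₀ one_lt_two (by omega)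
  have : (2 : ℝ) ^ (n + 2) - 1 ≠ 0 := by linarith
  simp only [logTerm]
  rw [tsum_mul_left, tsum_inv_odd_pow_sub_inv_even_pow (by omega), exponentTerm]
  field_simp
  ring

lemma abs_div_lt_one (hu : |u| < 1) {y : ℝ} (hy : 1 ≤ y) : |u / y| < 1 := by
  rw [abs_div, abs_of_pos (zero_lt_one.trans_le hy), div_lt_one (zero_lt_one.trans_le hy)]
  exact hu.trans_le hy

lemma tsum_logTerm_right (hu : |u| < 1) (i : ℕ) :
    ∑' n, logTerm u i n =
      2 * ((-Real.log (1 - u / (2 * i + 1)) - u / (2 * i + 1)) -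
        (-Real.log (1 - u / (2 * i + 2)) - u / (2 * i + 2))) := by
  have := i.cast_nonneg (α := ℝ)
  have hodd := hasSum_pow_add_two_div (abs_div_lt_one hu (y := 2 * i + 1) (by linarith))
  have heven := hasSum_pow_add_two_div (abs_div_lt_one hu (y := 2 * i + 2) (by linarith))
  rw [← ((hodd.sub heven).mul_left 2).tsum_eq]
  refine tsum_congr fun n => ?_
  rw [logTerm, div_pow, div_pow]
  field_simp

lemma abs_logTerm_le (hu : |u| ≤ 1) (i n : ℕ) :
    |logTerm u i n| ≤ ((2 * (i : ℝ) + 1) ^ 2)⁻¹ * |u| ^ n := by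
  have := i.cast_nonneg (α := ℝ)
  have hcoeff : |2 / ((n : ℝ) + 2)| ≤ 1 := by
    rw [abs_of_pos (by positivity), div_le_one (by positivity)]
    linarith [n.cast_nonneg (α := ℝ)]
  have hu_pow : |u ^ (n + 2)| ≤ |u| ^ n := by
    rw [abs_pow]
    exact pow_le_pow_of_le_one (abs_nonneg u) hu (by omega)
  have hdiff : |((2 * (i : ℝ) + 1) ^ (n + 2))⁻¹ - ((2 * (i : ℝ) + 2) ^ (n + 2))⁻¹| ≤
      ((2 * (i : ℝ) + 1) ^ 2)⁻¹ := by
    have hle : ((2 * (i : ℝ) + 2) ^ (n + 2))⁻¹ ≤ ((2 * (i : ℝ) + 1) ^ (n + 2))⁻¹ := by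
      gcongr
      norm_num
    rw [abs_of_nonneg (sub_nonneg.2 hle)]
    refine (sub_le_self _ (by positivity)).trans ?_
    gcongr
    · linarith
    · omega
  rw [logTerm, abs_mul, abs_mul]
  calc _ ≤ 1 * |u| ^ n * ((2 * (i : ℝ) + 1) ^ 2)⁻¹ := by gcongr
    _ = _ := by ring

lemma summable_logTerm (hu : |u| < 1) : Summable fun p : ℕ × ℕ => logTerm u p.1 p.2 :=
  .of_norm_bounded ((summable_inv_odd_pow le_rfl).mul_of_nonneg
    (summable_geometric_of_lt_one (abs_nonneg u) hu) (fun _ => by positivity)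
    (fun _ => by positivity)) fun p => abs_logTerm_le hu.le p.1 p.2

lemma summable_exponentTerm (hu : |u| < 1) : Summable (exponentTerm u) :=
  (summable_logTerm hu).prod_symm.prod.congr (tsum_logTerm_left u)

lemma tendsto_prod_one_sub_div_sq (hu : |u| < 1) :
    Tendsto (fun N => ∏ i ∈ range N,
      ((1 - u / (2 * (i : ℝ) + 1)) / (1 - u / (2 * i + 2))) ^ 2) atTop
      (𝓝 (Real.exp (-∑' n, exponentTerm u n - 2 * u * Real.log 2))) := by
  have hlog := (summable_logTerm hu).prod.hasSum.tendsto_sum_nat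
  have hcomm : ∑' i, ∑' n, logTerm u i n = ∑' n, exponentTerm u n := by
    simp only [← tsum_logTerm_left]
    exact (summable_logTerm hu).tsum_comm.symm
  rw [hcomm] at hlog
  refine ((Real.continuous_exp.tendsto _).comp (hlog.neg.sub
    (tendsto_sum_range_inv_odd_sub_inv_even.const_mul (2 * u)))).congr fun N => ?_
  rw [Function.comp_apply, mul_sum, ← sum_neg_distrib, ← sum_sub_distrib, Real.exp_sum]
  refine prod_congr rfl fun i _ => ?_
  have := i.cast_nonneg (α := ℝ)
  have hodd := sub_pos.2 (abs_lt.1 (abs_div_lt_one hu (y := 2 * i + 1) (by linarith))).2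
  have heven := sub_pos.2 (abs_lt.1 (abs_div_lt_one hu (y := 2 * i + 2) (by linarith))).2
  rw [tsum_logTerm_right hu, ← Real.exp_log (pow_pos (div_pos hodd heven) 2), Real.log_pow,
    Real.log_div hodd.ne' heven.ne']
  push_cast
  ring_nf

lemma dixonSum_zero : dixonSum 0 = tval 2 :=
  tsum_congr fun j => by rw [dixonTerm, oddRatio_zero_left, add_zero, sq]

lemma dixonSum_neg_eq (hu : |u| < 1) :
    dixonSum (-u) = 2 ^ (2 * u) * tval 2 * Real.exp (∑' n, exponentTerm u n) := by
  have h := mul_dixonSum_neg (abs_lt.1 hu).2 (tendsto_prod_one_sub_div_sq hu)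
  rw [dixonSum_zero] at h
  calc dixonSum (-u)
      = Real.exp (Real.log 2 * (2 * u) + (-∑' n, exponentTerm u n - 2 * u * Real.log 2) +
          ∑' n, exponentTerm u n) * dixonSum (-u) := by
        ring_nf
        simp
    _ = _ := by
        rw [Real.exp_add, Real.exp_add, Real.rpow_def_of_pos two_pos, ← h]
        ring

end ProductFormula

section WeightedSums

variable {u : ℝ}

lemma abs_oddInv_mul_lt_one (hu : |u| < 1) (i : ℕ) : |oddInv i * u| < 1 := by
  rw [abs_mul, abs_of_pos (oddInv_pos i)]
  exact (mul_le_of_le_one_left (abs_nonneg u) (oddInv_le_one i)).trans_lt hu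

lemma oddInv_sq_mul_prod_eq_dixonTerm (hu : u < 1) (i : ℕ) :
    oddInv i ^ 2 * (1 - oddInv i * u)⁻¹ *
      ∏ l ∈ range i, (1 + oddInv l * u) / (1 - oddInv l * u) = dixonTerm (-u) i := by
  have hne (l : ℕ) : 2 * (l : ℝ) + 1 - u ≠ 0 := by linarith [l.cast_nonneg (α := ℝ)]
  have hsub (l : ℕ) : 1 - oddInv l * u = oddInv l * (2 * l + 1 - u) := by
    rw [oddInv]
    field_simp
  have hadd (l : ℕ) : 1 + oddInv l * u = oddInv l * (2 * l + 1 + u) := by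
    rw [oddInv]
    field_simp
  have hfactor (l : ℕ) : (1 + oddInv l * u) / (1 - oddInv l * u) =
      (2 * (l : ℝ) + 1 - -u) / (2 * l + 1 + -u) := by
    rw [hadd, hsub, mul_div_mul_left _ _ (oddInv_pos l).ne', sub_neg_eq_add, ← sub_eq_add_neg]
  have := hne i
  rw [prod_congr rfl fun l _ => hfactor l, dixonTerm, oddRatio, hsub, oddInv, ← sub_eq_add_neg]
  field_simp

lemma evaluatesTo_headSeries_oddInv (hu : |u| < 1) (i : ℕ) :
    EvaluatesTo (headSeries 0 2 oddInv i) u (dixonTerm (-u) i) :=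
  oddInv_sq_mul_prod_eq_dixonTerm (abs_lt.1 hu).2 i ▸
    evaluatesTo_headSeries_zero_two (abs_oddInv_mul_lt_one hu) i

lemma hasSum_mul_pow_dixonSum {a : ℕ → ℝ}
    (ha : ∀ j, HasSum (fun i => PowerSeries.coeff j (headSeries 0 2 oddInv i)) (a j))
    (hu : |u| < 1) : HasSum (fun j => a j * u ^ j) (dixonSum (-u)) :=
  hasSum_mul_pow_of_evaluatesTo (coeff_headSeries_nonneg oddInv_nonneg) ha
    (evaluatesTo_headSeries_oddInv hu) (evaluatesTo_headSeries_oddInv (by rwa [abs_abs]))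
    (summable_dixonTerm (neg_lt_neg hu))

end WeightedSums

end MultipleTValue

/-- Weighted generating function identity (Proposition 2.5):
`∑_k (∑_n 2^{n-1} G₀(k,n)) u^{k-2} = ∑_k (∑_n (-1)^{k-n-1} 2^{n-1} G₀*(k,n)) u^{k-2}
 = 2^{2u} t(2) exp(∑_{n≥2} (4(2^{n-1}-1)/(n(2ⁿ-1))) t(n) uⁿ)`. -/
theorem weighted_sum_generating_function :
    ∃ δ > (0 : ℝ), ∀ u : ℝ, |u| < δ →
      Summable (fun j : ℕ =>
        (∑ n ∈ Finset.range (j + 1), (2 : ℝ) ^ n * G0d (j + 2) (n + 1)) * u ^ j) ∧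
      Summable (fun j : ℕ =>
        (∑ n ∈ Finset.range (j + 1),
          (-1 : ℝ) ^ (j - n) * 2 ^ n * G0dStar (j + 2) (n + 1)) * u ^ j) ∧
      Summable (fun n : ℕ =>
        4 * ((2 : ℝ) ^ (n + 1) - 1) / ((n + 2) * ((2 : ℝ) ^ (n + 2) - 1))
          * tval (n + 2) * u ^ (n + 2)) ∧
      (∑' j : ℕ,
        (∑ n ∈ Finset.range (j + 1), (2 : ℝ) ^ n * G0d (j + 2) (n + 1)) * u ^ j)
        = (∑' j : ℕ,
            (∑ n ∈ Finset.range (j + 1),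
              (-1 : ℝ) ^ (j - n) * 2 ^ n * G0dStar (j + 2) (n + 1)) * u ^ j) ∧
      (∑' j : ℕ,
        (∑ n ∈ Finset.range (j + 1), (2 : ℝ) ^ n * G0d (j + 2) (n + 1)) * u ^ j)
        = (2 : ℝ) ^ (2 * u) * tval 2 *
            Real.exp (∑' n : ℕ,
              4 * ((2 : ℝ) ^ (n + 1) - 1) / ((n + 2) * ((2 : ℝ) ^ (n + 2) - 1))
                * tval (n + 2) * u ^ (n + 2)) := by
  refine ⟨1, one_pos, fun u hu => ?_⟩
  have hG := MultipleTValue.hasSum_mul_pow_dixonSum MultipleTValue.hasSum_coeff_headSeries hu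
  have hGStar :=
    MultipleTValue.hasSum_mul_pow_dixonSum MultipleTValue.hasSum_coeff_headSeries_star hu
  exact ⟨hG.summable, hGStar.summable, MultipleTValue.summable_exponentTerm hu,
    hG.tsum_eq.trans hGStar.tsum_eq.symm,
    hG.tsum_eq.trans (MultipleTValue.dixonSum_neg_eq hu)⟩
end
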